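/- arXiv:1907.04605 — 5 statements merged into one kernel-verified Lean document; each statement's English description precedes it below -/
import Mathlib

section
/- Let m ≥ 1 and C > 0, and let f, h : [0, ∞) → ℝ be continuous functions such that for every 0 ≤ s ≤ t one has f(t) − f(s) ≤ −C ∫_s^t |f(τ)|^{m-1} f(τ) dτ and h(t) − h(s) = −C ∫_s^t |h(τ)|^{m-1} h(τ) dτ. If f(0) ≤ h(0), then f(t) ≤ h(t) for every t ≥ 0. -/
/-! If `f b > h b`, let `s` be the last time in `[a, b]` at which `f s ≤ h s`. On `(s, b]` we have
`h < f`, so a right-hand side that is antitone in the state makes the increment of `f` over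
`[s, b]` at most that of `h`, whence `f b ≤ h b`, a contradiction. -/

open MeasureTheory Set

theorem exists_last_le_of_continuousOn {α β : Type*} [LinearOrder α] [TopologicalSpace α]
    [OrderClosedTopology α] [CompactIccSpace α] [Preorder β] [TopologicalSpace β]
    [OrderClosedTopology β] {f g : α → β} {a b : α} (hab : a ≤ b)
    (hf : ContinuousOn f (Icc a b)) (hg : ContinuousOn g (Icc a b)) (ha : f a ≤ g a) :
    ∃ s ∈ Icc a b, f s ≤ g s ∧ ∀ x ∈ Ioc s b, ¬f x ≤ g x := by
  have hclosed : IsClosed {x ∈ Icc a b | f x ≤ g x} := isClosed_Icc.isClosed_le hf hg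
  have hcompact : IsCompact {x ∈ Icc a b | f x ≤ g x} :=
    isCompact_Icc.of_isClosed_subset hclosed (sep_subset _ _)
  obtain ⟨s, ⟨hs, hfg⟩, hmax⟩ := hcompact.exists_isGreatest ⟨a, left_mem_Icc.2 hab, ha⟩
  exact ⟨s, hs, hfg, fun x hx hle ↦ hx.1.not_ge (hmax ⟨⟨hs.1.trans hx.1.le, hx.2⟩, hle⟩)⟩

theorem le_of_sub_le_integral_of_integral_le_sub {v : ℝ → ℝ → ℝ} {f h : ℝ → ℝ} {a b : ℝ}
    (hab : a ≤ b) (hv : ∀ τ ∈ Ioo a b, Antitone (v τ))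
    (hfc : ContinuousOn f (Icc a b)) (hhc : ContinuousOn h (Icc a b))
    (hfi : IntervalIntegrable (fun τ ↦ v τ (f τ)) volume a b)
    (hhi : IntervalIntegrable (fun τ ↦ v τ (h τ)) volume a b)
    (hf : ∀ s ∈ Icc a b, f b - f s ≤ ∫ τ in s..b, v τ (f τ))
    (hh : ∀ s ∈ Icc a b, ∫ τ in s..b, v τ (h τ) ≤ h b - h s)
    (ha : f a ≤ h a) : f b ≤ h b := by
  obtain ⟨s, hs, hfs, hlt⟩ := exists_last_le_of_continuousOn hab hfc hhc ha
  have hsub : uIcc s b ⊆ uIcc a b := uIcc_subset_uIcc_right (Icc_subset_uIcc hs)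
  have hint : ∫ τ in s..b, v τ (f τ) ≤ ∫ τ in s..b, v τ (h τ) :=
    intervalIntegral.integral_mono_on_of_le_Ioo hs.2 (hfi.mono_set hsub) (hhi.mono_set hsub)
      fun τ hτ ↦ hv τ ⟨hs.1.trans_lt hτ.1, hτ.2⟩
        (not_le.1 (hlt τ (Ioo_subset_Ioc_self hτ))).le
  calc f b ≤ f s + ∫ τ in s..b, v τ (f τ) := sub_le_iff_le_add'.1 (hf s hs)
    _ ≤ h s + ∫ τ in s..b, v τ (h τ) := add_le_add hfs hint
    _ ≤ h b := le_sub_iff_add_le'.1 (hh s hs)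

theorem integrableOn_antitone_comp {X : Type*} [TopologicalSpace X] [MeasurableSpace X]
    [OpensMeasurableSpace X] {μ : Measure X} [IsFiniteMeasureOnCompacts μ] {K : Set X}
    {φ : ℝ → ℝ} {f : X → ℝ} (hφ : Antitone φ) (hK : IsCompact K) (hKm : MeasurableSet K)
    (hf : ContinuousOn f K) : IntegrableOn (fun x ↦ φ (f x)) K μ := by
  have hmeas : AEStronglyMeasurable (fun x ↦ φ (f x)) (μ.restrict K) :=
    (hφ.measurable.comp_aemeasurable (hf.aemeasurable hKm)).aestronglyMeasurable
  have hbdd : Bornology.IsBounded (φ '' (f '' K)) :=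
    isBounded_iff_bddBelow_bddAbove.2
      ⟨hφ.map_bddAbove (hK.bddAbove_image hf), hφ.map_bddBelow (hK.bddBelow_image hf)⟩
  obtain ⟨M, hM⟩ := hbdd.exists_norm_le
  exact .of_bound hK.measure_lt_top hmeas M <|
    (ae_restrict_mem hKm).mono fun x hx ↦ hM _ (mem_image_of_mem φ (mem_image_of_mem f hx))

theorem monotone_abs_rpow_mul_self {p : ℝ} (hp : -1 ≤ p) :
    Monotone fun x : ℝ ↦ |x| ^ p * x := by
  refine monotone_of_odd_of_monotoneOn_nonneg (fun x ↦ by simp only [abs_neg, mul_neg]) ?_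
  intro x hx y hy hxy
  rcases (mem_Ici.1 hx).eq_or_lt with rfl | hxpos
  · simpa only [mul_zero] using mul_nonneg (Real.rpow_nonneg (abs_nonneg y) p) hy
  · have hypos : 0 < y := hxpos.trans_le hxy
    simp only [abs_of_pos hxpos, abs_of_pos hypos, ← Real.rpow_add_one hxpos.ne',
      ← Real.rpow_add_one hypos.ne']
    exact Real.rpow_le_rpow hxpos.le hxy (by linarith)

theorem ode_comparison_general {φ f h : ℝ → ℝ} {a : ℝ} (hφ : Antitone φ)
    (hfc : ContinuousOn f (Ici a)) (hhc : ContinuousOn h (Ici a))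
    (hf : ∀ s t : ℝ, a ≤ s → s ≤ t → f t - f s ≤ ∫ τ in s..t, φ (f τ))
    (hh : ∀ s t : ℝ, a ≤ s → s ≤ t → ∫ τ in s..t, φ (h τ) ≤ h t - h s)
    (ha : f a ≤ h a) : ∀ t : ℝ, a ≤ t → f t ≤ h t := by
  intro t hat
  have hint {g : ℝ → ℝ} (hg : ContinuousOn g (Ici a)) :
      IntervalIntegrable (fun τ ↦ φ (g τ)) volume a t :=
    (intervalIntegrable_iff_integrableOn_Icc_of_le hat).2 <|
      integrableOn_antitone_comp hφ isCompact_Icc measurableSet_Icc (hg.mono Icc_subset_Ici_self)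
  exact le_of_sub_le_integral_of_integral_le_sub (v := fun _ ↦ φ) hat (fun _ _ ↦ hφ)
    (hfc.mono Icc_subset_Ici_self) (hhc.mono Icc_subset_Ici_self) (hint hfc) (hint hhc)
    (fun s hs ↦ hf s t hs.1 hs.2) (fun s hs ↦ hh s t hs.1 hs.2) ha

open intervalIntegral in
/-- Lemma B.2: a comparison principle for the integral form of the ODE `y' = -C|y|^{m-1}y`.
If `f(t) - f(s) ≤ -C ∫_s^t |f|^{m-1}f` and `h(t) - h(s) = -C ∫_s^t |h|^{m-1}h` for all
`0 ≤ s ≤ t`, with `f, h` continuous on `[0,∞)` and `f(0) ≤ h(0)`, then `f ≤ h` on `[0,∞)`. -/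
theorem ode_comparison (m C : ℝ) (hm : 1 ≤ m) (hC : 0 < C)
    (f h : ℝ → ℝ)
    (hfc : ContinuousOn f (Set.Ici 0)) (hhc : ContinuousOn h (Set.Ici 0))
    (hf : ∀ s t : ℝ, 0 ≤ s → s ≤ t →
      f t - f s ≤ -C * ∫ τ in s..t, |f τ| ^ (m - 1) * f τ)
    (hh : ∀ s t : ℝ, 0 ≤ s → s ≤ t →
      h t - h s = -C * ∫ τ in s..t, |h τ| ^ (m - 1) * h τ)
    (h0 : f 0 ≤ h 0) :
    ∀ t : ℝ, 0 ≤ t → f t ≤ h t := by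
  simp only [← intervalIntegral.integral_const_mul] at hf hh
  exact ode_comparison_general (φ := fun y ↦ -C * (|y| ^ (m - 1) * y))
    ((monotone_abs_rpow_mul_self (by linarith)).const_mul_of_nonpos (by linarith))
    hfc hhc hf (fun s t hs hst ↦ (hh s t hs hst).ge) h0
end

section
/- Let m > 1 and C > 0, and let f : [0, ∞) → [0, ∞) be a continuous function such that for every 0 ≤ s ≤ t one has f(t) − f(s) ≤ −C ∫_s^t f(τ)^m dτ. Then for every t > 0 one has f(t) ≤ (C(m−1)t)^{−1/(m−1)}. Moreover, if f(0) > 0 then for every t ≥ 0 one has f(t) ≤ (f(0)^{−(m−1)} + C(m−1)t)^{−1/(m−1)}. -/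
/-!
The integral inequality makes `f` antitone, hence almost everywhere differentiable with
`f' ≤ -C * f ^ m`. Where `f` is positive, `f ^ (-(m - 1))` is therefore monotone with derivative at
least `C * (m - 1)` almost everywhere. A monotone function grows by at least the integral of its
derivative, so jumps of `f` only help, and `f ^ (-(m - 1))` grows at least linearly with slope
`C * (m - 1)`; inverting the power gives the decay of `f`. The bound that does not involve the
initial value follows by dropping its nonnegative contribution.
-/

open Set Filter Topology MeasureTheory

theorem right_endpoint_mul_sub_le_integral_of_antitoneOn {g : ℝ → ℝ} {a b : ℝ} (hab : a ≤ b)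
    (hg : AntitoneOn g (Icc a b)) : g b * (b - a) ≤ ∫ x in a..b, g x := by
  have hint : IntervalIntegrable g volume a b :=
    AntitoneOn.intervalIntegrable (by rwa [uIcc_of_le hab])
  calc g b * (b - a) = ∫ _ in a..b, g b := by
        rw [intervalIntegral.integral_const, smul_eq_mul, mul_comm]
    _ ≤ ∫ x in a..b, g x := intervalIntegral.integral_mono_on hab intervalIntegrable_const hint
        fun _ hx => hg hx (right_mem_Icc.2 hab) hx.2

theorem mul_sub_le_sub_of_monotoneOn_of_ae_le_deriv {g : ℝ → ℝ} {a b c : ℝ} (hab : a ≤ b)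
    (hg : MonotoneOn g (Icc a b)) (hc : ∀ᵐ x, x ∈ Ioo a b → c ≤ deriv g x) :
    c * (b - a) ≤ g b - g a := by
  have hg' : MonotoneOn g (uIcc a b) := by rwa [uIcc_of_le hab]
  have hgab : g a ≤ g b := hg (left_mem_Icc.2 hab) (right_mem_Icc.2 hab) hab
  have hc' : ∀ᵐ x ∂volume.restrict (Icc a b), c ≤ deriv g x := by
    rw [← restrict_Ioo_eq_restrict_Icc]
    exact (ae_restrict_iff' measurableSet_Ioo).2 hc
  calc c * (b - a) = ∫ _ in a..b, c := by
        rw [intervalIntegral.integral_const, smul_eq_mul, mul_comm]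
    _ ≤ ∫ x in a..b, deriv g x := intervalIntegral.integral_mono_ae_restrict hab
        intervalIntegrable_const hg'.intervalIntegrable_deriv hc'
    _ ≤ g b - g a := by
        have hmem := hg'.intervalIntegral_deriv_mem_uIcc
        rw [uIcc_of_le (sub_nonneg.2 hgab)] at hmem
        exact hmem.2

theorem ae_differentiableAt_of_antitoneOn_Icc {f : ℝ → ℝ} {a b : ℝ}
    (hf : AntitoneOn f (Icc a b)) : ∀ᵐ x, x ∈ Ioo a b → DifferentiableAt ℝ f x := by
  filter_upwards [hf.neg.ae_differentiableWithinAt_of_mem] with x hdiff hx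
  exact differentiableAt_fun_neg_iff.1
    ((hdiff (Ioo_subset_Icc_self hx)).differentiableAt (Icc_mem_nhds hx.1 hx.2))

theorem deriv_le_of_eventually_sub_le_mul_sub {f g : ℝ → ℝ} {x : ℝ}
    (hf : DifferentiableAt ℝ f x) (hg : ContinuousWithinAt g (Ioi x) x)
    (h : ∀ᶠ y in 𝓝[>] x, f y - f x ≤ g y * (y - x)) : deriv f x ≤ g x := by
  have hslope : Tendsto (slope f x) (𝓝[>] x) (𝓝 (deriv f x)) :=
    (hasDerivWithinAt_iff_tendsto_slope' self_notMem_Ioi).1 hf.hasDerivAt.hasDerivWithinAt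
  refine le_of_tendsto_of_tendsto hslope hg ?_
  filter_upwards [h, self_mem_nhdsWithin] with y hy hxy
  rw [slope_def_field]
  exact (div_le_iff₀ (sub_pos.2 hxy)).2 hy

theorem mul_sub_one_le_deriv_rpow {f : ℝ → ℝ} {x m C : ℝ} (hm : 1 ≤ m)
    (hf : DifferentiableAt ℝ f x) (hpos : 0 < f x) (h : deriv f x ≤ -C * f x ^ m) :
    C * (m - 1) ≤ deriv (fun y => f y ^ (-(m - 1))) x := by
  have hcancel : f x ^ m * f x ^ (-m) = 1 := by
    rw [← Real.rpow_add hpos, add_neg_cancel, Real.rpow_zero]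
  have hderiv : deriv (fun y => f y ^ (-(m - 1))) x = (m - 1) * (-deriv f x * f x ^ (-m)) := by
    rw [(hf.hasDerivAt.rpow_const (Or.inl hpos.ne')).deriv,
      show -(m - 1) - 1 = -m by ring]
    ring
  calc C * (m - 1) = (m - 1) * (C * f x ^ m * f x ^ (-m)) := by
        rw [mul_assoc C, hcancel, mul_one, mul_comm]
    _ ≤ (m - 1) * (-deriv f x * f x ^ (-m)) := by
        gcongr
        linarith
    _ = deriv (fun y => f y ^ (-(m - 1))) x := hderiv.symm

/-- `f` satisfies the integrated form of the differential inequality `f' ≤ -C * f ^ m` between any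
two points of `S`. Integrability of `f ^ m` is not part of the definition: for nonnegative `f` and
`0 ≤ C`, `0 ≤ m` it holds because `f` is then antitone. -/
def PowerDecayOn (C m : ℝ) (f : ℝ → ℝ) (S : Set ℝ) : Prop :=
  ∀ ⦃s⦄, s ∈ S → ∀ ⦃t⦄, t ∈ S → s ≤ t → f t - f s ≤ -C * ∫ τ in s..t, f τ ^ m

namespace PowerDecayOn

variable {C m a b x : ℝ} {f : ℝ → ℝ} {S : Set ℝ}

theorem antitoneOn [S.OrdConnected] (h : PowerDecayOn C m f S) (hC : 0 ≤ C)
    (hf : ∀ t ∈ S, 0 ≤ f t) : AntitoneOn f S := by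
  intro s hs t ht hst
  have hint : 0 ≤ ∫ τ in s..t, f τ ^ m := intervalIntegral.integral_nonneg hst
    fun τ hτ => Real.rpow_nonneg (hf τ (S.Icc_subset hs ht hτ)) m
  linarith [h hs ht hst, mul_nonneg hC hint]

theorem sub_le_mul_sub [S.OrdConnected] (h : PowerDecayOn C m f S) (hC : 0 ≤ C) (hm : 0 ≤ m)
    (hf : ∀ t ∈ S, 0 ≤ f t) (ha : a ∈ S) (hb : b ∈ S) (hab : a ≤ b) :
    f b - f a ≤ -C * f b ^ m * (b - a) := by
  have hsub : Icc a b ⊆ S := S.Icc_subset ha hb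
  have hanti : AntitoneOn (fun τ => f τ ^ m) (Icc a b) := fun s hs t ht hst =>
    Real.rpow_le_rpow (hf t (hsub ht)) (h.antitoneOn hC hf (hsub hs) (hsub ht) hst) hm
  have hint := right_endpoint_mul_sub_le_integral_of_antitoneOn hab hanti
  linarith [h ha hb hab, mul_le_mul_of_nonneg_left hint hC]

theorem deriv_le [S.OrdConnected] (h : PowerDecayOn C m f S) (hC : 0 ≤ C) (hm : 0 ≤ m)
    (hf : ∀ t ∈ S, 0 ≤ f t) (hx : S ∈ 𝓝 x) (hdiff : DifferentiableAt ℝ f x) :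
    deriv f x ≤ -C * f x ^ m := by
  have hcont : ContinuousAt (fun y => -C * f y ^ m) x :=
    (hdiff.continuousAt.rpow_const (Or.inr hm)).const_mul (-C)
  refine deriv_le_of_eventually_sub_le_mul_sub hdiff hcont.continuousWithinAt ?_
  filter_upwards [mem_nhdsWithin_of_mem_nhds hx, self_mem_nhdsWithin] with y hy hxy
  exact h.sub_le_mul_sub hC hm hf (mem_of_mem_nhds hx) hy (le_of_lt hxy)

theorem rpow_add_le_rpow [S.OrdConnected] (h : PowerDecayOn C m f S) (hC : 0 ≤ C) (hm : 1 ≤ m)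
    (hf : ∀ t ∈ S, 0 ≤ f t) (ha : a ∈ S) (hb : b ∈ S) (hab : a ≤ b) (hpos : 0 < f b) :
    f a ^ (-(m - 1)) + C * (m - 1) * (b - a) ≤ f b ^ (-(m - 1)) := by
  have hsub : Icc a b ⊆ S := S.Icc_subset ha hb
  have hanti : AntitoneOn f (Icc a b) := (h.antitoneOn hC hf).mono hsub
  have hfpos : ∀ x ∈ Icc a b, 0 < f x := fun x hx =>
    hpos.trans_le (hanti hx (right_mem_Icc.2 hab) hx.2)
  have hmono : MonotoneOn (fun x => f x ^ (-(m - 1))) (Icc a b) := fun x hx y hy hxy =>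
    Real.rpow_le_rpow_of_nonpos (hfpos y hy) (hanti hx hy hxy) (by linarith)
  have hderiv : ∀ᵐ x, x ∈ Ioo a b → C * (m - 1) ≤ deriv (fun y => f y ^ (-(m - 1))) x := by
    filter_upwards [ae_differentiableAt_of_antitoneOn_Icc hanti] with x hdiff hx
    have hxS : S ∈ 𝓝 x := mem_of_superset (Icc_mem_nhds hx.1 hx.2) hsub
    exact mul_sub_one_le_deriv_rpow hm (hdiff hx) (hfpos x (Ioo_subset_Icc_self hx))
      (h.deriv_le hC (by linarith) hf hxS (hdiff hx))
  linarith [mul_sub_le_sub_of_monotoneOn_of_ae_le_deriv hab hmono hderiv]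

theorem le_rpow_add [S.OrdConnected] (h : PowerDecayOn C m f S) (hC : 0 ≤ C) (hm : 1 < m)
    (hf : ∀ t ∈ S, 0 ≤ f t) (ha : a ∈ S) (hb : b ∈ S) (hab : a ≤ b) (hpos : 0 < f a) :
    f b ≤ (f a ^ (-(m - 1)) + C * (m - 1) * (b - a)) ^ (-(1 / (m - 1))) := by
  have hbase : 0 < f a ^ (-(m - 1)) + C * (m - 1) * (b - a) :=
    add_pos_of_pos_of_nonneg (Real.rpow_pos_of_pos hpos _)
      (mul_nonneg (mul_nonneg hC (by linarith)) (sub_nonneg.2 hab))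
  rcases (hf b hb).eq_or_lt with hzero | hfb
  · exact hzero ▸ Real.rpow_nonneg hbase.le _
  · rw [one_div, ← inv_neg, Real.le_rpow_inv_iff_of_neg hfb hbase (by linarith)]
    exact h.rpow_add_le_rpow hC hm.le hf ha hb hab hfb

theorem le_rpow [S.OrdConnected] (h : PowerDecayOn C m f S) (hC : 0 < C) (hm : 1 < m)
    (hf : ∀ t ∈ S, 0 ≤ f t) (ha : a ∈ S) (hb : b ∈ S) (hab : a < b) :
    f b ≤ (C * (m - 1) * (b - a)) ^ (-(1 / (m - 1))) := by
  have hm' : 0 < m - 1 := sub_pos.2 hm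
  have hbase : 0 < C * (m - 1) * (b - a) := mul_pos (mul_pos hC hm') (sub_pos.2 hab)
  rcases (hf a ha).eq_or_lt with hzero | hfa
  · calc f b ≤ f a := h.antitoneOn hC.le hf ha hb hab.le
      _ = 0 := hzero.symm
      _ ≤ (C * (m - 1) * (b - a)) ^ (-(1 / (m - 1))) := Real.rpow_nonneg hbase.le _
  · calc f b ≤ (f a ^ (-(m - 1)) + C * (m - 1) * (b - a)) ^ (-(1 / (m - 1))) :=
          h.le_rpow_add hC.le hm hf ha hb hab.le hfa
      _ ≤ (C * (m - 1) * (b - a)) ^ (-(1 / (m - 1))) :=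
          Real.rpow_le_rpow_of_nonpos hbase
            (le_add_of_nonneg_left (Real.rpow_nonneg hfa.le _))
            (neg_nonpos.2 (one_div_pos.2 hm').le)

end PowerDecayOn

theorem polynomial_decay_general (m C : ℝ) (hm : 1 < m) (hC : 0 < C) (f : ℝ → ℝ)
    (hfnonneg : ∀ t : ℝ, 0 ≤ t → 0 ≤ f t)
    (hf : ∀ s t : ℝ, 0 ≤ s → s ≤ t → f t - f s ≤ -C * ∫ τ in s..t, f τ ^ m) :
    (∀ t : ℝ, 0 < t → f t ≤ (C * (m - 1) * t) ^ (-(1 / (m - 1)))) ∧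
    (0 < f 0 → ∀ t : ℝ, 0 ≤ t →
      f t ≤ (f 0 ^ (-(m - 1)) + C * (m - 1) * t) ^ (-(1 / (m - 1)))) := by
  have hdecay : PowerDecayOn C m f (Ici 0) := fun s hs t _ hst => hf s t hs hst
  constructor
  · intro t ht
    simpa only [sub_zero] using hdecay.le_rpow hC hm hfnonneg self_mem_Ici ht.le ht
  · intro hf0 t ht
    simpa only [sub_zero] using hdecay.le_rpow_add hC.le hm hfnonneg self_mem_Ici ht ht hf0

/-- Uniform-in-initial-condition polynomial decay: if `f : [0,∞) → [0,∞)` is continuous and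
satisfies `f(t) - f(s) ≤ -C ∫_s^t f^m` for all `0 ≤ s ≤ t` (with `m > 1`, `C > 0`), then
`f(t) ≤ (C(m-1)t)^{-1/(m-1)}` for `t > 0`, and if `f(0) > 0` then
`f(t) ≤ (f(0)^{-(m-1)} + C(m-1)t)^{-1/(m-1)}` for all `t ≥ 0`. -/
theorem polynomial_decay (m C : ℝ) (hm : 1 < m) (hC : 0 < C)
    (f : ℝ → ℝ) (hfc : ContinuousOn f (Set.Ici 0))
    (hfnonneg : ∀ t : ℝ, 0 ≤ t → 0 ≤ f t)
    (hf : ∀ s t : ℝ, 0 ≤ s → s ≤ t → f t - f s ≤ -C * ∫ τ in s..t, f τ ^ m) :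
    (∀ t : ℝ, 0 < t → f t ≤ (C * (m - 1) * t) ^ (-(1 / (m - 1)))) ∧
    (0 < f 0 → ∀ t : ℝ, 0 ≤ t →
      f t ≤ (f 0 ^ (-(m - 1)) + C * (m - 1) * t) ^ (-(1 / (m - 1)))) :=
  polynomial_decay_general m C hm hC f hfnonneg hf
end

section
/- Let q > 1 and C₁, C₂, C₃ > 0. There exists a constant C > 0, depending only on q, C₁, C₂, C₃, such that every differentiable function f : [0, ∞) → [0, ∞) satisfying f′(t) ≤ −C₁ f(t)^q + C₂ f(t) + C₃ for all t ≥ 0 obeys the bound f(t) ≤ C (t ∧ 1)^{−1/(q−1)} for every t > 0; in particular the bound is uniform in the initial value f(0). -/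
/-!
Since `q > 1`, half of `C₁ x ^ q` absorbs `C₂ x + C₃` once `x` exceeds some level `M`, so
`f' ≤ -(C₁ / 2) f ^ q` wherever `f ≥ M`. In particular `f` cannot cross `M` upwards: if `f T > M`,
then `f > M` at all earlier times. The substitution `g = f ^ (1 - q)` linearises the inequality to
`g' ≥ (q - 1) C₁ / 2`, and `g ≥ 0` at the start however large `f` is there, which bounds `g T` from
below by a multiple of `T`.
-/

open Set Filter Topology

theorem eventually_affine_le_mul_rpow {q c : ℝ} (hq : 1 < q) (hc : 0 < c) (a b : ℝ) :
    ∀ᶠ x : ℝ in atTop, a * x + b ≤ c * x ^ q := by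
  have h_rpow : ∀ᶠ x : ℝ in atTop, |a| + |b| ≤ c * x ^ (q - 1) :=
    ((tendsto_rpow_atTop (sub_pos.2 hq)).const_mul_atTop hc).eventually_ge_atTop _
  filter_upwards [h_rpow, eventually_ge_atTop 1] with x hx hx_one
  have hx_pos : 0 < x := one_pos.trans_le hx_one
  calc a * x + b
      ≤ |a| * x + |b| * x := by
        gcongr
        · exact le_abs_self a
        · exact (le_abs_self b).trans (le_mul_of_one_le_right (abs_nonneg b) hx_one)
    _ = (|a| + |b|) * x := (add_mul _ _ _).symm
    _ ≤ c * x ^ (q - 1) * x := by gcongr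
    _ = c * x ^ q := by rw [mul_assoc, Real.rpow_sub_one hx_pos.ne', div_mul_cancel₀ _ hx_pos.ne']

section DifferentialInequality

variable {f f' : ℝ → ℝ} {a b : ℝ}

theorem lt_image_of_deriv_right_neg_at_level {M : ℝ} (hf : ContinuousOn f (Icc a b))
    (hf' : ∀ x ∈ Ico a b, HasDerivWithinAt f (f' x) (Ici x) x)
    (h_neg : ∀ x ∈ Ico a b, f x = M → f' x < 0) (hb : M < f b) :
    ∀ x ∈ Icc a b, M < f x := by
  intro s hs
  by_contra! hsM
  have h_sub : Ico s b ⊆ Ico a b := Ico_subset_Ico_left hs.1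
  have h_le : f b ≤ M :=
    image_le_of_deriv_right_lt_deriv_boundary (hf.mono (Icc_subset_Icc_left hs.1))
      (fun x hx ↦ hf' x (h_sub hx)) hsM (fun x ↦ hasDerivAt_const x M)
      (fun x hx ↦ h_neg x (h_sub hx)) (right_mem_Icc.2 hs.2)
  exact hb.not_ge h_le

theorem rpow_one_sub_add_mul_sub_le_of_deriv_right_le {q c : ℝ} (hq : 1 ≤ q) (hab : a ≤ b)
    (hf : ContinuousOn f (Icc a b)) (hf' : ∀ x ∈ Ico a b, HasDerivWithinAt f (f' x) (Ici x) x)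
    (h_pos : ∀ x ∈ Icc a b, 0 < f x) (h_le : ∀ x ∈ Ico a b, f' x ≤ -c * f x ^ q) :
    f a ^ (1 - q) + (q - 1) * c * (b - a) ≤ f b ^ (1 - q) := by
  have h_linear (x : ℝ) : HasDerivAt (fun s ↦ f a ^ (1 - q) + (q - 1) * c * (s - a))
      ((q - 1) * c) x := by
    simpa only [mul_one, id_eq] using
      (((hasDerivAt_id x).sub_const a).const_mul ((q - 1) * c)).const_add (f a ^ (1 - q))
  refine image_le_of_deriv_right_le_deriv_boundary (B := fun s ↦ f s ^ (1 - q))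
    (fun x _ ↦ (h_linear x).continuousAt.continuousWithinAt)
    (fun x _ ↦ (h_linear x).hasDerivWithinAt) (by simp only [sub_self, mul_zero, add_zero, le_refl])
    (hf.rpow_const fun x hx ↦ .inl (h_pos x hx).ne')
    (fun x hx ↦ (hf' x hx).rpow_const (.inl (h_pos x (Ico_subset_Icc_self hx)).ne'))
    (fun x hx ↦ ?_) (right_mem_Icc.2 hab)
  have hx_pos : 0 < f x := h_pos x (Ico_subset_Icc_self hx)
  have h_cancel : f x ^ q * f x ^ (1 - q - 1) = 1 := by
    rw [← Real.rpow_add hx_pos, sub_right_comm, sub_self, zero_sub, add_neg_cancel, Real.rpow_zero]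
  calc (q - 1) * c
      = -c * f x ^ q * ((1 - q) * f x ^ (1 - q - 1)) := by
        linear_combination (1 - q) * c * h_cancel
    _ ≤ f' x * ((1 - q) * f x ^ (1 - q - 1)) :=
        mul_le_mul_of_nonpos_right (h_le x hx)
          (mul_nonpos_of_nonpos_of_nonneg (by linarith) (Real.rpow_nonneg hx_pos.le _))
    _ = f' x * (1 - q) * f x ^ (1 - q - 1) := (mul_assoc _ _ _).symm

variable {q c M : ℝ}

theorem image_le_max_rpow_of_deriv_right_le (hq : 1 < q) (hc : 0 < c) (hM : 0 < M) (hab : a < b)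
    (hf : ContinuousOn f (Icc a b)) (hf' : ∀ x ∈ Ico a b, HasDerivWithinAt f (f' x) (Ici x) x)
    (h_le : ∀ x ∈ Ico a b, M ≤ f x → f' x ≤ -c * f x ^ q) :
    f b ≤ max M (((q - 1) * c * (b - a)) ^ (-(1 / (q - 1)))) := by
  refine le_max_iff.2 (or_iff_not_imp_left.2 fun hb ↦ ?_)
  have h_neg (x) (hx : x ∈ Ico a b) (hxM : f x = M) : f' x < 0 := by
    have h_rpow : 0 < f x ^ q := Real.rpow_pos_of_pos (hxM ▸ hM) q
    exact (h_le x hx hxM.ge).trans_lt (mul_neg_of_neg_of_pos (neg_lt_zero.2 hc) h_rpow)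
  have h_above := lt_image_of_deriv_right_neg_at_level hf hf' h_neg (not_le.1 hb)
  have h_pos (x) (hx : x ∈ Icc a b) : 0 < f x := hM.trans (h_above x hx)
  have h_growth := rpow_one_sub_add_mul_sub_le_of_deriv_right_le hq.le hab.le hf hf' h_pos
    fun x hx ↦ h_le x hx (h_above x (Ico_subset_Icc_self hx)).le
  have h_start : 0 ≤ f a ^ (1 - q) := Real.rpow_nonneg (h_pos a (left_mem_Icc.2 hab.le)).le _
  have h_exp : -(1 / (q - 1)) = (1 - q)⁻¹ := by rw [one_div, ← inv_neg, neg_sub]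
  have h_factor : 0 < (q - 1) * c * (b - a) :=
    mul_pos (mul_pos (sub_pos.2 hq) hc) (sub_pos.2 hab)
  rw [h_exp, Real.le_rpow_inv_iff_of_neg (h_pos b (right_mem_Icc.2 hab.le)) h_factor
    (sub_neg.2 hq)]
  linarith

theorem image_le_max_rpow_of_deriv_right_le_Ioc (hq : 1 < q) (hc : 0 < c) (hM : 0 < M)
    (hab : a < b) (hf : ContinuousOn f (Ioc a b))
    (hf' : ∀ x ∈ Ioo a b, HasDerivWithinAt f (f' x) (Ici x) x)
    (h_le : ∀ x ∈ Ioo a b, M ≤ f x → f' x ≤ -c * f x ^ q) :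
    f b ≤ max M (((q - 1) * c * (b - a)) ^ (-(1 / (q - 1)))) := by
  have h_factor : (q - 1) * c * (b - a) ≠ 0 :=
    (mul_pos (mul_pos (sub_pos.2 hq) hc) (sub_pos.2 hab)).ne'
  have h_tendsto : Tendsto (fun s ↦ max M (((q - 1) * c * (b - s)) ^ (-(1 / (q - 1))))) (𝓝[>] a)
      (𝓝 (max M (((q - 1) * c * (b - a)) ^ (-(1 / (q - 1)))))) := by
    have h_base : ContinuousAt (fun s ↦ (q - 1) * c * (b - s)) a := by fun_prop
    exact (tendsto_const_nhds.max (h_base.rpow_const (.inl h_factor))).mono_left nhdsWithin_le_nhds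
  refine ge_of_tendsto h_tendsto ?_
  filter_upwards [Ioo_mem_nhdsGT hab] with s hs
  have h_sub : Ico s b ⊆ Ioo a b := fun x hx ↦ ⟨hs.1.trans_le hx.1, hx.2⟩
  exact image_le_max_rpow_of_deriv_right_le hq hc hM hs.2
    (hf.mono fun x hx ↦ ⟨hs.1.trans_le hx.1, hx.2⟩) (fun x hx ↦ hf' x (h_sub hx))
    fun x hx ↦ h_le x (h_sub hx)

end DifferentialInequality

theorem max_mul_rpow_le_add_mul_min_one_rpow {M k p t : ℝ} (hM : 0 ≤ M) (hk : 0 ≤ k) (hp : p ≤ 0)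
    (ht : 0 < t) : max M ((k * t) ^ p) ≤ (M + k ^ p) * min t 1 ^ p := by
  have h_min : 0 < min t 1 := lt_min ht one_pos
  have h_one : 1 ≤ min t 1 ^ p :=
    Real.one_le_rpow_of_pos_of_le_one_of_nonpos h_min (min_le_right t 1) hp
  have h_rpow : t ^ p ≤ min t 1 ^ p := Real.rpow_le_rpow_of_nonpos h_min (min_le_left t 1) hp
  calc max M ((k * t) ^ p)
      ≤ M + (k * t) ^ p := max_le_add_of_nonneg hM (by positivity)
    _ = M * 1 + k ^ p * t ^ p := by rw [Real.mul_rpow hk ht.le, mul_one]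
    _ ≤ M * min t 1 ^ p + k ^ p * min t 1 ^ p := by gcongr
    _ = (M + k ^ p) * min t 1 ^ p := (add_mul _ _ _).symm

theorem coming_down_from_infinity_general {q C₁ : ℝ} (hq : 1 < q) (hC₁ : 0 < C₁) (C₂ C₃ : ℝ) :
    ∃ C : ℝ, 0 < C ∧ ∀ (f f' : ℝ → ℝ) (T : ℝ), 0 < T →
      ContinuousOn f (Ioc 0 T) →
      (∀ t ∈ Ioo 0 T, HasDerivWithinAt f (f' t) (Ici t) t) →
      (∀ t ∈ Ioo 0 T, 0 < f t → f' t ≤ -C₁ * f t ^ q + C₂ * f t + C₃) →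
      f T ≤ C * min T 1 ^ (-(1 / (q - 1))) := by
  obtain ⟨M, hM⟩ := eventually_atTop.1 <|
    (eventually_affine_le_mul_rpow hq (half_pos hC₁) C₂ C₃).and (eventually_gt_atTop 0)
  have hM_pos : 0 < M := (hM M le_rfl).2
  have h_rate : 0 < (q - 1) * (C₁ / 2) := mul_pos (sub_pos.2 hq) (half_pos hC₁)
  have h_exp : -(1 / (q - 1)) ≤ 0 := neg_nonpos.2 (one_div_nonneg.2 (sub_pos.2 hq).le)
  refine ⟨M + ((q - 1) * (C₁ / 2)) ^ (-(1 / (q - 1))),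
    add_pos hM_pos (Real.rpow_pos_of_pos h_rate _),
    fun f f' T hT hf hf' h_le ↦ ?_⟩
  have h_absorbed (t) (ht : t ∈ Ioo 0 T) (htM : M ≤ f t) : f' t ≤ -(C₁ / 2) * f t ^ q := by
    obtain ⟨h_affine, h_pos⟩ := hM (f t) htM
    linarith [h_le t ht h_pos]
  have h_max : f T ≤ max M (((q - 1) * (C₁ / 2) * T) ^ (-(1 / (q - 1)))) := by
    simpa only [sub_zero] using
      image_le_max_rpow_of_deriv_right_le_Ioc hq (half_pos hC₁) hM_pos hT hf hf' h_absorbed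
  exact h_max.trans (max_mul_rpow_le_add_mul_min_one_rpow hM_pos.le h_rate.le h_exp hT)

/-- "Coming down from infinity" differential inequality estimate: for `q > 1` and
`C₁, C₂, C₃ > 0` there is `C > 0` (depending only on `q, C₁, C₂, C₃`) such that every
nonnegative differentiable `f` on `[0,∞)` with `f' ≤ -C₁ f^q + C₂ f + C₃` satisfies
`f(t) ≤ C (t ∧ 1)^{-1/(q-1)}` for every `t > 0`, uniformly in `f(0)`. -/
theorem coming_down_from_infinity (q C₁ C₂ C₃ : ℝ) (hq : 1 < q)
    (h1 : 0 < C₁) (h2 : 0 < C₂) (h3 : 0 < C₃) :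
    ∃ C : ℝ, 0 < C ∧ ∀ f f' : ℝ → ℝ,
      (∀ t : ℝ, 0 ≤ t → 0 ≤ f t) →
      (∀ t : ℝ, 0 ≤ t → HasDerivWithinAt f (f' t) (Set.Ici 0) t) →
      (∀ t : ℝ, 0 ≤ t → f' t ≤ -C₁ * f t ^ q + C₂ * f t + C₃) →
      ∀ t : ℝ, 0 < t → f t ≤ C * (min t 1) ^ (-(1 / (q - 1))) := by
  obtain ⟨C, hC, h_bound⟩ := coming_down_from_infinity_general hq h1 C₂ C₃
  exact ⟨C, hC, fun f f' _ hf' h_le T hT ↦ h_bound f f' T hT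
    (fun t ht ↦ (hf' t ht.1.le).continuousWithinAt.mono fun s hs ↦ hs.1.le)
    (fun t ht ↦ (hf' t ht.1.le).mono (Ici_subset_Ici.2 ht.1.le)) fun t ht _ ↦ h_le t ht.1.le⟩
end

section
/- Let m > 1, K ≥ 1, λ ≥ 0 and R ∈ (0, ∞). Let 𝔞, ã : [0, ∞) → ℝ be measurable functions satisfying |𝔞(s)| ≤ K(1 + s^{(m−1)/2}) and |ã(s)| ≤ K(1 + s^{(m−1)/2}) for all s ≥ 0, and |𝔞(s) − ã(s)| ≤ λ for all s ∈ [0, R]. Define A(r) := sgn(r) ∫_0^{|r|} 𝔞(s)² ds and Ã(r) := sgn(r) ∫_0^{|r|} ã(s)² ds for r ∈ ℝ. Then there exists a constant C > 0, depending only on K and m, such that for every r ∈ ℝ: |A(r) − Ã(r)| ≤ C ( λ(1 + |r|^{(m+1)/2}) + 𝟙_{|r| ≥ R}(1 + |r|^m) ), where 𝟙_{|r| ≥ R} equals 1 if |r| ≥ R and 0 otherwise. -/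
/-!
Integrate a bound on `𝔞² - ã²` that is uniform on `[0, |r|]`, where
`|𝔞|, |ã| ≤ B := K(1 + |r|^p)` with `p := (m - 1)/2`. If `|r| < R`, then
`𝔞² - ã² = (𝔞 - ã)(𝔞 + ã)` is at most `2λB`, and `|r|B` grows like `|r|^(p + 1)`. If `|r| ≥ R`,
then `|𝔞² - ã²| ≤ B²`, and `|r|B²` grows like `|r|^(2p + 1)`. Here `p + 1 = (m + 1)/2` and
`2p + 1 = m`.
-/

open MeasureTheory Set

open scoped Interval

section Pointwise

variable {x y B δ : ℝ}

theorem abs_sq_sub_sq_le_of_abs_le (hx : |x| ≤ B) (hy : |y| ≤ B) : |x ^ 2 - y ^ 2| ≤ B ^ 2 :=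
  abs_sub_le_of_nonneg_of_le (sq_nonneg x) (sq_le_sq' (abs_le.1 hx).1 (abs_le.1 hx).2)
    (sq_nonneg y) (sq_le_sq' (abs_le.1 hy).1 (abs_le.1 hy).2)

theorem abs_sq_sub_sq_le_of_abs_sub_le (hx : |x| ≤ B) (hy : |y| ≤ B) (hxy : |x - y| ≤ δ) :
    |x ^ 2 - y ^ 2| ≤ 2 * B * δ := by
  have hadd : |x + y| ≤ 2 * B := by linarith [abs_add_le x y]
  calc |x ^ 2 - y ^ 2| = |x + y| * |x - y| := by rw [sq_sub_sq, abs_mul]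
    _ ≤ 2 * B * δ := mul_le_mul hadd hxy (abs_nonneg _) ((abs_nonneg _).trans hadd)

theorem abs_sign_mul_sub_sign_mul_le (r x y : ℝ) :
    |Real.sign r * x - Real.sign r * y| ≤ |x - y| := by
  rw [← mul_sub, abs_mul]
  refine mul_le_of_le_one_left (abs_nonneg _) ?_
  rcases Real.sign_apply_eq r with h | h | h <;> simp [h]

end Pointwise

section PowerGrowth

variable {p s t x K : ℝ}

theorem le_one_add_rpow (ht : 0 ≤ t) (hp : 1 ≤ p) : t ≤ 1 + t ^ p := by
  rcases le_total t 1 with h | h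
  · linarith [Real.rpow_nonneg ht p]
  · linarith [Real.self_le_rpow_of_one_le h hp]

theorem one_add_rpow_mul_self_le (ht : 0 ≤ t) (hp : 0 ≤ p) :
    (1 + t ^ p) * t ≤ 2 * (1 + t ^ (p + 1)) := by
  have hmul : t ^ (p + 1) = t ^ p * t := Real.rpow_add_one' ht (by positivity)
  have hlin : t ≤ 1 + t ^ (p + 1) := le_one_add_rpow ht (by linarith)
  linarith

theorem one_add_rpow_sq_mul_self_le (ht : 0 ≤ t) (hp : 0 ≤ p) :
    (1 + t ^ p) ^ 2 * t ≤ 4 * (1 + t ^ (2 * p + 1)) := by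
  have hsq : (t ^ p) ^ 2 = t ^ (2 * p) := by
    rw [← Real.rpow_mul_natCast ht, Nat.cast_ofNat, mul_comm]
  calc (1 + t ^ p) ^ 2 * t
      ≤ 2 * (1 + t ^ (2 * p)) * t := by
        gcongr
        linarith [add_sq_le (a := (1 : ℝ)) (b := t ^ p)]
    _ = 2 * ((1 + t ^ (2 * p)) * t) := mul_assoc _ _ _
    _ ≤ 2 * (2 * (1 + t ^ (2 * p + 1))) :=
        mul_le_mul_of_nonneg_left (one_add_rpow_mul_self_le ht (by positivity)) zero_le_two
    _ = 4 * (1 + t ^ (2 * p + 1)) := by ring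

theorem nonneg_of_abs_le_mul_one_add_rpow (hs : 0 ≤ s) (h : |x| ≤ K * (1 + s ^ p)) : 0 ≤ K :=
  nonneg_of_mul_nonneg_left ((abs_nonneg x).trans h) (by positivity)

theorem abs_le_mul_one_add_rpow_of_le (hp : 0 ≤ p) (hs : 0 ≤ s) (hst : s ≤ t)
    (h : |x| ≤ K * (1 + s ^ p)) : |x| ≤ K * (1 + t ^ p) := by
  have hK : 0 ≤ K := nonneg_of_abs_le_mul_one_add_rpow hs h
  exact h.trans (by gcongr)

end PowerGrowth

section IntervalIntegral

variable {f g : ℝ → ℝ} {u v B δ : ℝ}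

theorem intervalIntegrable_sq_of_abs_le {μ : Measure ℝ} [IsLocallyFiniteMeasure μ]
    (hf : AEStronglyMeasurable f (μ.restrict (Ι u v))) (hB : ∀ s ∈ Ι u v, |f s| ≤ B) :
    IntervalIntegrable (fun s => f s ^ 2) μ u v := by
  refine (intervalIntegrable_const (c := B ^ 2)).mono_fun' (hf.pow 2) ?_
  refine ae_restrict_of_forall_mem measurableSet_uIoc fun s hs => ?_
  simp only [norm_pow, Real.norm_eq_abs]
  exact pow_le_pow_left₀ (abs_nonneg _) (hB s hs) 2

theorem norm_integral_sub_integral_le {E : Type*} [NormedAddCommGroup E] [NormedSpace ℝ E]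
    {f g : ℝ → E} (hf : IntervalIntegrable f volume u v) (hg : IntervalIntegrable g volume u v)
    (h : ∀ s ∈ Ι u v, ‖f s - g s‖ ≤ δ) :
    ‖(∫ s in u..v, f s) - ∫ s in u..v, g s‖ ≤ δ * |v - u| := by
  rw [← intervalIntegral.integral_sub hf hg]
  exact intervalIntegral.norm_integral_le_of_norm_le_const h

theorem abs_integral_sq_sub_integral_sq_le
    (hf : AEStronglyMeasurable f (volume.restrict (Ι u v)))
    (hg : AEStronglyMeasurable g (volume.restrict (Ι u v)))
    (hfB : ∀ s ∈ Ι u v, |f s| ≤ B) (hgB : ∀ s ∈ Ι u v, |g s| ≤ B) :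
    |(∫ s in u..v, f s ^ 2) - ∫ s in u..v, g s ^ 2| ≤ B ^ 2 * |v - u| :=
  norm_integral_sub_integral_le (intervalIntegrable_sq_of_abs_le hf hfB)
    (intervalIntegrable_sq_of_abs_le hg hgB)
    fun s hs => abs_sq_sub_sq_le_of_abs_le (hfB s hs) (hgB s hs)

theorem abs_integral_sq_sub_integral_sq_le_of_abs_sub_le
    (hf : AEStronglyMeasurable f (volume.restrict (Ι u v)))
    (hg : AEStronglyMeasurable g (volume.restrict (Ι u v)))
    (hfB : ∀ s ∈ Ι u v, |f s| ≤ B) (hgB : ∀ s ∈ Ι u v, |g s| ≤ B)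
    (hfg : ∀ s ∈ Ι u v, |f s - g s| ≤ δ) :
    |(∫ s in u..v, f s ^ 2) - ∫ s in u..v, g s ^ 2| ≤ 2 * B * δ * |v - u| :=
  norm_integral_sub_integral_le (intervalIntegrable_sq_of_abs_le hf hfB)
    (intervalIntegrable_sq_of_abs_le hg hgB)
    fun s hs => abs_sq_sub_sq_le_of_abs_sub_le (hfB s hs) (hgB s hs) (hfg s hs)

end IntervalIntegral

section GrowthEstimates

variable {f g : ℝ → ℝ} {K p t δ : ℝ}

theorem forall_uIoc_abs_le_of_growth (hp : 0 ≤ p) (ht : 0 ≤ t)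
    (hf : ∀ s ∈ Icc 0 t, |f s| ≤ K * (1 + s ^ p)) :
    ∀ s ∈ Ι 0 t, |f s| ≤ K * (1 + t ^ p) := by
  rw [uIoc_of_le ht]
  exact fun s hs => abs_le_mul_one_add_rpow_of_le hp hs.1.le hs.2 (hf s (Ioc_subset_Icc_self hs))

theorem abs_integral_sq_sub_integral_sq_le_of_growth (hp : 0 ≤ p) (ht : 0 ≤ t)
    (hf : AEStronglyMeasurable f (volume.restrict (Ι 0 t)))
    (hg : AEStronglyMeasurable g (volume.restrict (Ι 0 t)))
    (hfK : ∀ s ∈ Icc 0 t, |f s| ≤ K * (1 + s ^ p))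
    (hgK : ∀ s ∈ Icc 0 t, |g s| ≤ K * (1 + s ^ p)) :
    |(∫ s in 0..t, f s ^ 2) - ∫ s in 0..t, g s ^ 2| ≤ 4 * K ^ 2 * (1 + t ^ (2 * p + 1)) :=
  calc |(∫ s in 0..t, f s ^ 2) - ∫ s in 0..t, g s ^ 2|
      ≤ (K * (1 + t ^ p)) ^ 2 * |t - 0| :=
        abs_integral_sq_sub_integral_sq_le hf hg (forall_uIoc_abs_le_of_growth hp ht hfK)
          (forall_uIoc_abs_le_of_growth hp ht hgK)
    _ = K ^ 2 * ((1 + t ^ p) ^ 2 * t) := by rw [sub_zero, abs_of_nonneg ht]; ring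
    _ ≤ K ^ 2 * (4 * (1 + t ^ (2 * p + 1))) :=
        mul_le_mul_of_nonneg_left (one_add_rpow_sq_mul_self_le ht hp) (sq_nonneg K)
    _ = 4 * K ^ 2 * (1 + t ^ (2 * p + 1)) := by ring

theorem abs_integral_sq_sub_integral_sq_le_of_growth_of_abs_sub_le (hp : 0 ≤ p) (ht : 0 ≤ t)
    (hf : AEStronglyMeasurable f (volume.restrict (Ι 0 t)))
    (hg : AEStronglyMeasurable g (volume.restrict (Ι 0 t)))
    (hfK : ∀ s ∈ Icc 0 t, |f s| ≤ K * (1 + s ^ p))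
    (hgK : ∀ s ∈ Icc 0 t, |g s| ≤ K * (1 + s ^ p))
    (hfg : ∀ s ∈ Icc 0 t, |f s - g s| ≤ δ) :
    |(∫ s in 0..t, f s ^ 2) - ∫ s in 0..t, g s ^ 2| ≤ 4 * K * (δ * (1 + t ^ (p + 1))) := by
  have h0 : (0 : ℝ) ∈ Icc 0 t := left_mem_Icc.2 ht
  have hK : 0 ≤ K := nonneg_of_abs_le_mul_one_add_rpow le_rfl (hfK 0 h0)
  have hδ : 0 ≤ δ := (abs_nonneg _).trans (hfg 0 h0)
  have hfg' : ∀ s ∈ Ι 0 t, |f s - g s| ≤ δ := by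
    rw [uIoc_of_le ht]
    exact fun s hs => hfg s (Ioc_subset_Icc_self hs)
  calc |(∫ s in 0..t, f s ^ 2) - ∫ s in 0..t, g s ^ 2|
      ≤ 2 * (K * (1 + t ^ p)) * δ * |t - 0| :=
        abs_integral_sq_sub_integral_sq_le_of_abs_sub_le hf hg
          (forall_uIoc_abs_le_of_growth hp ht hfK) (forall_uIoc_abs_le_of_growth hp ht hgK) hfg'
    _ = 2 * K * δ * ((1 + t ^ p) * t) := by rw [sub_zero, abs_of_nonneg ht]; ring
    _ ≤ 2 * K * δ * (2 * (1 + t ^ (p + 1))) :=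
        mul_le_mul_of_nonneg_left (one_add_rpow_mul_self_le ht hp) (by positivity)
    _ = 4 * K * (δ * (1 + t ^ (p + 1))) := by ring

end GrowthEstimates

theorem nonlinearity_difference_estimate_general {m K lam R : ℝ} {a ta : ℝ → ℝ} (hm : 1 ≤ m)
    (hlam : 0 ≤ lam) (ha : Measurable a) (hta : Measurable ta)
    (haK : ∀ s : ℝ, 0 ≤ s → |a s| ≤ K * (1 + s ^ ((m - 1) / 2)))
    (htaK : ∀ s : ℝ, 0 ≤ s → |ta s| ≤ K * (1 + s ^ ((m - 1) / 2)))
    (hclose : ∀ s ∈ Icc (0 : ℝ) R, |a s - ta s| ≤ lam) (r : ℝ) :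
    |Real.sign r * (∫ s in (0 : ℝ)..|r|, (a s) ^ 2) -
        Real.sign r * (∫ s in (0 : ℝ)..|r|, (ta s) ^ 2)| ≤
      4 * K * (lam * (1 + |r| ^ ((m + 1) / 2))) +
        4 * K ^ 2 * ((if R ≤ |r| then (1 : ℝ) else 0) * (1 + |r| ^ m)) := by
  have hK : 0 ≤ K := nonneg_of_abs_le_mul_one_add_rpow le_rfl (haK 0 le_rfl)
  have hp : 0 ≤ (m - 1) / 2 := by linarith
  have hp_add_one : (m - 1) / 2 + 1 = (m + 1) / 2 := by ring
  have htwo_p_add_one : 2 * ((m - 1) / 2) + 1 = m := by ring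
  refine (abs_sign_mul_sub_sign_mul_le r _ _).trans ?_
  split_ifs with hR
  · have hfar := abs_integral_sq_sub_integral_sq_le_of_growth hp (abs_nonneg r)
      ha.aestronglyMeasurable hta.aestronglyMeasurable
      (fun s hs => haK s hs.1) (fun s hs => htaK s hs.1)
    rw [htwo_p_add_one] at hfar
    rw [one_mul]
    exact le_add_of_nonneg_of_le (by positivity) hfar
  · have hnear := abs_integral_sq_sub_integral_sq_le_of_growth_of_abs_sub_le hp (abs_nonneg r)
      ha.aestronglyMeasurable hta.aestronglyMeasurable
      (fun s hs => haK s hs.1) (fun s hs => htaK s hs.1)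
      fun s hs => hclose s (Icc_subset_Icc_right (not_le.1 hR).le hs)
    rw [hp_add_one] at hnear
    rwa [zero_mul, mul_zero, add_zero]

/-- Estimate on the difference of two porous-medium-type nonlinearities
`A(r) = sgn(r) ∫_0^{|r|} 𝔞(s)² ds` and `Ã(r) = sgn(r) ∫_0^{|r|} ã(s)² ds`, where
`𝔞, ã` have `(m-1)/2`-growth (constant `K`) and are `λ`-close on `[0, R]`:
`|A(r) − Ã(r)| ≤ C(λ(1 + |r|^{(m+1)/2}) + 𝟙_{|r| ≥ R}(1 + |r|^m))` with `C = C(K, m)`. -/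
theorem nonlinearity_difference_estimate (m K : ℝ) (hm : 1 < m) (hK : 1 ≤ K) :
    ∃ C : ℝ, 0 < C ∧ ∀ (lam R : ℝ), 0 ≤ lam → 0 < R →
      ∀ a ta : ℝ → ℝ, Measurable a → Measurable ta →
      (∀ s : ℝ, 0 ≤ s → |a s| ≤ K * (1 + s ^ ((m - 1) / 2))) →
      (∀ s : ℝ, 0 ≤ s → |ta s| ≤ K * (1 + s ^ ((m - 1) / 2))) →
      (∀ s ∈ Set.Icc (0 : ℝ) R, |a s - ta s| ≤ lam) →
      ∀ r : ℝ,
        |Real.sign r * (∫ s in (0 : ℝ)..|r|, (a s) ^ 2) -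
            Real.sign r * (∫ s in (0 : ℝ)..|r|, (ta s) ^ 2)| ≤
          C * (lam * (1 + |r| ^ ((m + 1) / 2)) +
            (if R ≤ |r| then (1 : ℝ) else 0) * (1 + |r| ^ m)) := by
  refine ⟨4 * K ^ 2, by positivity, fun lam R hlam _ a ta ha hta haK htaK hclose r =>
    (nonlinearity_difference_estimate_general hm.le hlam ha hta haK htaK hclose r).trans ?_⟩
  rw [mul_add (4 * K ^ 2)]
  gcongr
  exact le_self_pow₀ hK two_ne_zero
end

section
/- Let m > 1 and K ≥ 1, and let A : ℝ → ℝ be differentiable, strictly increasing and odd, such that 𝔞 := √(A′) is differentiable away from the origin and satisfies: |𝔞(0)| ≤ K; |𝔞′(r)| ≤ K r^{(m−3)/2} for all r > 0; K𝔞(r) ≥ 1 whenever |r| ≥ 1; and, with [𝔞](r) := ∫_0^r 𝔞(ζ) dζ, K|[𝔞](r) − [𝔞](r̃)| ≥ |r − r̃| whenever |r| ∨ |r̃| ≥ 1 and K|[𝔞](r) − [𝔞](r̃)| ≥ |r − r̃|^{(m+1)/2} whenever |r| ∨ |r̃| < 1. Then for every integer n ≥ 1 there exists an increasing, infinitely differentiable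 function Aₙ : ℝ → ℝ with bounded derivatives which satisfies all of the above conditions with K replaced by 3K, and such that, with 𝔞ₙ := √(Aₙ′), one has 𝔞ₙ(r) ≥ 2/n for every r ∈ ℝ and sup_{|r| ≤ n} |𝔞(r) − 𝔞ₙ(r)| ≤ 4/n. -/
open intervalIntegral

/-- Assumption 2.1(a) of the paper with constant `K`: `A` is strictly increasing, odd and
differentiable with `A' = 𝔞²` for the nonnegative function `𝔞 = √(A')`, `𝔞` is differentiable
away from the origin with derivative `𝔞'`, and the stated bounds with constant `K` hold, where
`[𝔞](r) = ∫_0^r 𝔞`. -/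
def SatisfiesAssumptionA (m K : ℝ) (A a a' : ℝ → ℝ) : Prop :=
  StrictMono A ∧
  (∀ r : ℝ, A (-r) = -A r) ∧
  (∀ r : ℝ, 0 ≤ a r) ∧
  (∀ r : ℝ, HasDerivAt A ((a r) ^ 2) r) ∧
  (∀ r : ℝ, r ≠ 0 → HasDerivAt a (a' r) r) ∧
  |a 0| ≤ K ∧
  (∀ r : ℝ, 0 < r → |a' r| ≤ K * r ^ ((m - 3) / 2)) ∧
  (∀ r : ℝ, 1 ≤ |r| → 1 ≤ K * a r) ∧
  (∀ r rt : ℝ, 1 ≤ max |r| |rt| →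
    |r - rt| ≤ K * |(∫ ζ in (0 : ℝ)..r, a ζ) - ∫ ζ in (0 : ℝ)..rt, a ζ|) ∧
  (∀ r rt : ℝ, max |r| |rt| < 1 →
    |r - rt| ^ ((m + 1) / 2) ≤ K * |(∫ ζ in (0 : ℝ)..r, a ζ) - ∫ ζ in (0 : ℝ)..rt, a ζ|)

/-!
The derivative bound with `(m - 3) / 2 > -1` gives `𝔞` a limit at `0+`, and this limit is `𝔞(0)`
because `𝔞²` is a derivative; so `𝔞` is continuous. Lower `𝔞` slightly, cut it off below at a small
positive level, freeze it for `|r| ≥ R` and for `|r| ≤ δ`: none of this worsens the rate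
`K r ^ ((m - 3) / 2)` of local Lipschitz continuity. Mollifying at a scale small compared with `δ`
averages over points `s` with `s / r` close to `1`, so the rate grows by at most a factor `3`.
Adding `ε` gives a smooth `𝔞ₙ ≥ 𝔞` on `[-R, R]`, and `Aₙ` is the primitive of `𝔞ₙ²`.

The lower bounds on increments of `[𝔞ₙ]` in the unit interval follow from `𝔞 ≤ 𝔞ₙ`. Away from it
they say that `G(r) = K [𝔞ₙ](r) - r` does not decrease from `r̃` to `r`; here `G` is odd, increasing
on `[1, ∞)`, and at most `G(1)` on `[-1, 1]`.
-/

open Set Filter Topology MeasureTheory Metric ContinuousLinearMap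
open scoped Convolution NNReal

section Rpow

lemma rpow_le_max_rpow_of_mem_uIcc {x y s : ℝ} (hx : 0 < x) (hy : 0 < y) (hs : s ∈ uIcc x y)
    (p : ℝ) : s ^ p ≤ max (x ^ p) (y ^ p) := by
  wlog hxy : x ≤ y generalizing x y
  · rw [max_comm]
    exact this hy hx (uIcc_comm x y ▸ hs) (not_le.1 hxy).le
  rw [uIcc_of_le hxy] at hs
  rcases le_total 0 p with hp | hp
  · exact le_max_of_le_right (Real.rpow_le_rpow (hx.le.trans hs.1) hs.2 hp)
  · exact le_max_of_le_left (Real.rpow_le_rpow_of_nonpos hx hs.1 hp)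

lemma exists_rpow_le_mul_rpow (p : ℝ) {c : ℝ} (hc : 1 < c) :
    ∃ κ, 0 < κ ∧ κ ≤ 1 ∧ ∀ r s : ℝ, 0 < r → |s - r| < κ * r → s ^ p ≤ c * r ^ p := by
  have hlt : ∀ᶠ s : ℝ in 𝓝 1, s ^ p < c :=
    (Real.continuousAt_rpow_const 1 p (Or.inl one_ne_zero)).eventually_lt_const
      (by simpa only [Real.one_rpow] using hc)
  obtain ⟨κ, hκ, hball⟩ := Metric.eventually_nhds_iff.1 hlt
  refine ⟨min κ 1, lt_min hκ one_pos, min_le_right _ _, fun r s hr hs => ?_⟩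
  have hs_pos : 0 < s := by
    have : |s - r| < r := hs.trans_le (mul_le_of_le_one_left hr.le (min_le_right _ _))
    linarith [(abs_lt.1 this).1]
  have hratio : dist (s / r) 1 < κ := by
    rw [Real.dist_eq, div_sub_one hr.ne', abs_div, abs_of_pos hr, div_lt_iff₀ hr]
    exact hs.trans_le (mul_le_mul_of_nonneg_right (min_le_left _ _) hr.le)
  rw [← div_le_iff₀ (Real.rpow_pos_of_pos hr p), ← Real.div_rpow hs_pos.le hr.le]
  exact (hball hratio).le

end Rpow

/-- Local Lipschitz continuity on `(0, ∞)` with rate `K r ^ p`: the integrated form of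
`|u'(r)| ≤ K r ^ p`, which survives truncations that destroy differentiability. Nothing is required
of `u` on `(-∞, 0]`. -/
def RpowLipschitz (K p : ℝ) (u : ℝ → ℝ) : Prop :=
  ∀ x y : ℝ, 0 < x → 0 < y → |u x - u y| ≤ K * max (x ^ p) (y ^ p) * |x - y|

namespace RpowLipschitz

variable {K p : ℝ} {u : ℝ → ℝ}

lemma of_hasDerivAt {u' : ℝ → ℝ} (hu : ∀ r, 0 < r → HasDerivAt u (u' r) r)
    (hu' : ∀ r, 0 < r → |u' r| ≤ K * r ^ p) : RpowLipschitz K p u := by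
  intro x y hx hy
  have hK : 0 ≤ K := by simpa using (abs_nonneg _).trans (hu' 1 one_pos)
  have hpos : ∀ s ∈ uIcc x y, 0 < s := fun s hs => (lt_min hx hy).trans_le hs.1
  exact (convex_uIcc x y).norm_image_sub_le_of_norm_hasDerivWithin_le
    (fun s hs => (hu s (hpos s hs)).hasDerivWithinAt)
    (fun s hs => (hu' s (hpos s hs)).trans
      (mul_le_mul_of_nonneg_left (rpow_le_max_rpow_of_mem_uIcc hx hy hs p) hK))
    right_mem_uIcc left_mem_uIcc

lemma nonneg (hu : RpowLipschitz K p u) : 0 ≤ K := by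
  have h := (abs_nonneg _).trans (hu 1 2 one_pos two_pos)
  rw [mul_assoc] at h
  exact nonneg_of_mul_nonneg_left h (by norm_num)

lemma max_sub_const (hu : RpowLipschitz K p u) (s t : ℝ) :
    RpowLipschitz K p fun r => max (u r - s) t := fun x y hx hy => by
  refine (abs_max_sub_max_le_abs _ _ t).trans ?_
  rw [sub_sub_sub_cancel_right]
  exact hu x y hx hy

lemma comp_of_mem_uIcc (hu : RpowLipschitz K p u) {T : ℝ → ℝ}
    (hT : ∀ x y, T x = T y ∨ T x ∈ uIcc x y ∧ T y ∈ uIcc x y) :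
    RpowLipschitz K p (u ∘ T) := by
  intro x y hx hy
  have hK := hu.nonneg
  rcases hT x y with hxy | ⟨hTx, hTy⟩
  · simp only [Function.comp_apply, hxy, sub_self, abs_zero]
    positivity
  have hpos : ∀ s ∈ uIcc x y, 0 < s := fun s hs => (lt_min hx hy).trans_le hs.1
  have hmax : max (T x ^ p) (T y ^ p) ≤ max (x ^ p) (y ^ p) :=
    max_le (rpow_le_max_rpow_of_mem_uIcc hx hy hTx p) (rpow_le_max_rpow_of_mem_uIcc hx hy hTy p)
  have hdist : |T x - T y| ≤ |x - y| := by
    rw [abs_sub_comm x]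
    exact abs_sub_le_of_uIcc_subset_uIcc (uIcc_subset_uIcc hTy hTx)
  exact (hu _ _ (hpos _ hTx) (hpos _ hTy)).trans (by gcongr)

lemma comp_min_const (hu : RpowLipschitz K p u) (R : ℝ) :
    RpowLipschitz K p fun r => u (min r R) :=
  hu.comp_of_mem_uIcc (T := (min · R)) fun x y => by
    rcases le_total x R with hx | hx <;> rcases le_total y R with hy | hy <;>
      simp [mem_uIcc, hx, hy]

lemma comp_max_const (hu : RpowLipschitz K p u) (δ : ℝ) :
    RpowLipschitz K p fun r => u (max r δ) :=
  hu.comp_of_mem_uIcc (T := (max · δ)) fun x y => by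
    rcases le_total x δ with hx | hx <;> rcases le_total y δ with hy | hy <;>
      simp [mem_uIcc, hx, hy]

end RpowLipschitz

section Mollification

variable {G E : Type*} [NormedAddCommGroup G] [NormedSpace ℝ G] [HasContDiffBump G]
  [FiniteDimensional ℝ G] [MeasurableSpace G] [BorelSpace G] [NormedAddCommGroup E]
  [NormedSpace ℝ E]

lemma lipschitzOnWith_normed_convolution {μ : Measure G} [μ.IsAddHaarMeasure]
    (φ : ContDiffBump (0 : G)) {b : G → E} (hb : Continuous b) {C : ℝ≥0} {x₀ : G} {s : ℝ}
    (hlip : LipschitzOnWith C b (ball x₀ (s + φ.rOut))) :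
    LipschitzOnWith C (φ.normed μ ⋆[lsmul ℝ ℝ, μ] b) (ball x₀ s) := by
  have hint : ∀ x, Integrable (fun t => φ.normed μ t • b (x - t)) μ := fun x =>
    (φ.continuous_normed.smul (hb.comp (continuous_const.sub continuous_id)))
      |>.integrable_of_hasCompactSupport φ.hasCompactSupport_normed.smul_right
  refine LipschitzOnWith.of_dist_le_mul fun x hx y hy => ?_
  have hpoint : ∀ t, ‖φ.normed μ t • b (x - t) - φ.normed μ t • b (y - t)‖
      ≤ φ.normed μ t * (C * dist x y) := by
    intro t
    rw [← smul_sub, norm_smul, Real.norm_of_nonneg (φ.nonneg_normed t)]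
    by_cases ht : t ∈ ball 0 φ.rOut
    · have hmem : ∀ z ∈ ball x₀ s, z - t ∈ ball x₀ (s + φ.rOut) := fun z hz => by
        rw [mem_ball_iff_norm, sub_right_comm]
        exact (norm_sub_le _ _).trans_lt
          (add_lt_add (mem_ball_iff_norm.1 hz) (mem_ball_zero_iff.1 ht))
      have hle := hlip.dist_le_mul _ (hmem x hx) _ (hmem y hy)
      rw [dist_sub_right, dist_eq_norm (b _)] at hle
      exact mul_le_mul_of_nonneg_left hle (φ.nonneg_normed t)
    · rw [← φ.support_normed_eq (μ := μ), Function.notMem_support] at ht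
      simp [ht]
  calc dist ((φ.normed μ ⋆[lsmul ℝ ℝ, μ] b) x) ((φ.normed μ ⋆[lsmul ℝ ℝ, μ] b) y)
      = ‖∫ t, (φ.normed μ t • b (x - t) - φ.normed μ t • b (y - t)) ∂μ‖ := by
        rw [integral_sub (hint x) (hint y), dist_eq_norm]; rfl
    _ ≤ ∫ t, φ.normed μ t * (C * dist x y) ∂μ :=
        norm_integral_le_of_norm_le (φ.integrable_normed.mul_const _) (ae_of_all _ hpoint)
    _ = C * dist x y := by rw [MeasureTheory.integral_mul_const, φ.integral_normed, one_mul]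

lemma hasCompactSupport_normed_convolution_sub_const [CompleteSpace E] {μ : Measure G}
    [μ.IsAddHaarMeasure] (φ : ContDiffBump (0 : G)) {b : G → E} {k : E} {R : ℝ}
    (hbk : ∀ x, R ≤ ‖x‖ → b x = k) :
    HasCompactSupport fun x => (φ.normed μ ⋆[lsmul ℝ ℝ, μ] b) x - k := by
  refine HasCompactSupport.intro (isCompact_closedBall 0 (R + φ.rOut)) fun x hx => ?_
  rw [mem_closedBall_zero_iff, not_le] at hx
  have hball : ∀ y ∈ ball x φ.rOut, b y = k := fun y hy => by
    rw [mem_ball, dist_comm, dist_eq_norm] at hy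
    exact hbk y (by linarith [norm_sub_norm_le x y])
  have hx_eq : b x = k := hball x (mem_ball_self φ.rOut_pos)
  rw [sub_eq_zero, φ.normed_convolution_eq_right fun y hy => (hball y hy).trans hx_eq.symm, hx_eq]

end Mollification

section Smoothing

variable {v : ℝ → ℝ}

lemma uniformContinuous_comp_abs_of_eventually_const (hv : Continuous v) {R k : ℝ}
    (hvk : ∀ r, R ≤ r → v r = k) : UniformContinuous fun r => v |r| := by
  have hlim : Tendsto (fun r => v |r|) (cocompact ℝ) (𝓝 k) :=
    tendsto_const_nhds.congr' <|
      (tendsto_norm_cocompact_atTop.eventually_ge_atTop R).mono fun r hr => (hvk _ hr).symm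
  exact (hv.comp continuous_abs).uniformContinuous_of_tendsto_cocompact hlim

lemma lipschitzOnWith_comp_max_abs {K p c κ δ r : ℝ} (hL : RpowLipschitz K p v) (hκ : κ ≤ 1)
    (hpow : ∀ s, |s - r| < κ * r → s ^ p ≤ c * r ^ p) (hδ : 0 < δ) (hr : 0 < r) (hc : 0 ≤ c) :
    LipschitzOnWith (c * K * r ^ p).toNNReal (fun x => v (max |x| δ)) (ball r (κ * δ / 2)) := by
  have hK := hL.nonneg
  refine LipschitzOnWith.of_dist_le_mul fun x hx y hy => ?_
  rw [Real.coe_toNNReal _ (by positivity), Real.dist_eq, Real.dist_eq]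
  rw [mem_ball, Real.dist_eq] at hx hy
  have hκ_pos : 0 < κ := by
    have := (abs_nonneg _).trans_lt hx
    exact pos_of_mul_pos_left (by linarith) hδ.le
  have hκδ : κ * δ ≤ δ := mul_le_of_le_one_left hδ.le hκ
  rcases le_or_gt r (δ / 2) with hrδ | hrδ
  · have hflat : ∀ z, |z - r| < κ * δ / 2 → max |z| δ = δ := fun z hz => by
      rw [abs_lt] at hz
      exact max_eq_right (abs_le.2 ⟨by linarith, by linarith⟩)
    rw [hflat x hx, hflat y hy, sub_self, abs_zero]
    positivity
  · have hpos : ∀ z, |z - r| < κ * δ / 2 → 0 < z := fun z hz => by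
      linarith [(abs_lt.1 hz).1]
    have hpow' : ∀ z, |z - r| < κ * δ / 2 → z ^ p ≤ c * r ^ p := fun z hz =>
      hpow z (hz.trans (by rw [mul_div_assoc]; gcongr))
    rw [abs_of_pos (hpos x hx), abs_of_pos (hpos y hy)]
    calc |v (max x δ) - v (max y δ)|
        ≤ K * max (x ^ p) (y ^ p) * |x - y| := hL.comp_max_const δ x y (hpos x hx) (hpos y hy)
      _ ≤ K * (c * r ^ p) * |x - y| := by gcongr; exact max_le (hpow' x hx) (hpow' y hy)
      _ = c * K * r ^ p * |x - y| := by ring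

lemma exists_contDiff_approx_comp_abs {K p c R k η : ℝ} (hv : Continuous v)
    (hL : RpowLipschitz K p v) (hvk : ∀ r, R ≤ r → v r = k) (hc : 1 < c) (hη : 0 < η) :
    ∃ f : ℝ → ℝ, ContDiff ℝ (⊤ : ℕ∞) f ∧ (∀ r, f (-r) = f r) ∧ (∀ r, |f r - v (|r|)| ≤ η) ∧
      (∀ r, 0 < r → |deriv f r| ≤ c * K * r ^ p) ∧ HasCompactSupport fun r => f r - k := by
  obtain ⟨d, hd, hmod⟩ := Metric.uniformContinuous_iff.1
    (uniformContinuous_comp_abs_of_eventually_const hv hvk) η hη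
  obtain ⟨κ, hκ_pos, hκ, hpow⟩ := exists_rpow_le_mul_rpow p hc
  set δ := d / 2 with hδ_def
  have hδ : 0 < δ := half_pos hd
  have hκδ : κ * δ ≤ δ := mul_le_of_le_one_left hδ.le hκ
  set ρ := κ * δ / 4 with hρ_def
  have hρ : 0 < ρ := by positivity
  let φ : ContDiffBump (0 : ℝ) := ⟨ρ / 2, ρ, half_pos hρ, half_lt_self hρ⟩
  -- Flattening `v` near `0` keeps the averages away from the singularity of `r ^ p`.
  let b : ℝ → ℝ := fun x => v (max |x| δ)
  have hb : Continuous b := by fun_prop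
  let f : ℝ → ℝ := φ.normed volume ⋆[lsmul ℝ ℝ, volume] b
  refine ⟨f, ?_, fun r => ?_, fun r => ?_, fun r hr => ?_, ?_⟩
  · exact φ.hasCompactSupport_normed.contDiff_convolution_left _ φ.contDiff_normed
      hb.locallyIntegrable
  · exact convolution_neg_of_neg_eq _ (ae_of_all _ φ.normed_neg)
      (ae_of_all _ fun x => by simp only [b, abs_neg])
  · refine dist_convolution_le hη.le φ.support_normed_eq.subset φ.nonneg_normed
      φ.integral_normed hb.aestronglyMeasurable fun x hx => ?_
    have hδx : 0 ≤ max |x| δ := hδ.le.trans (le_max_right _ _)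
    have hdist : dist (max |x| δ) |r| < d := by
      have hx' : dist |x| |r| < ρ := (abs_abs_sub_abs_le x r).trans_lt hx
      have hmax : dist (max |x| δ) |x| ≤ δ := by
        rw [Real.dist_eq, abs_of_nonneg (sub_nonneg.2 (le_max_left _ _)), sub_le_iff_le_add]
        exact max_le (le_add_of_nonneg_left hδ.le) (le_add_of_nonneg_right (abs_nonneg x))
      linarith [dist_triangle (max |x| δ) |x| |r|]
    simpa only [abs_of_nonneg hδx, abs_abs] using (hmod hdist).le
  · have hlip : LipschitzOnWith (c * K * r ^ p).toNNReal f (ball r ρ) := by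
      refine lipschitzOnWith_normed_convolution φ hb ?_
      rw [show ρ + φ.rOut = κ * δ / 2 by simp only [φ, hρ_def]; ring]
      exact lipschitzOnWith_comp_max_abs hL hκ (fun s => hpow r s hr) hδ hr (by linarith)
    have hK := hL.nonneg
    have h := norm_deriv_le_of_lipschitzOn (ball_mem_nhds r hρ) hlip
    rwa [Real.coe_toNNReal _ (by positivity)] at h
  · exact hasCompactSupport_normed_convolution_sub_const φ fun x hx =>
      hvk _ (le_max_of_le_left hx)

lemma exists_contDiff_majorant {a : ℝ → ℝ} {K p c R M ε : ℝ} (ha : Continuous a)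
    (ha0 : ∀ r, 0 ≤ a r) (hL : RpowLipschitz K p a) (hc : 1 < c) (hR : 0 ≤ R) (haM : a 0 ≤ M)
    (hM : 0 < M) (hε : 0 < ε) :
    ∃ f : ℝ → ℝ, ContDiff ℝ (⊤ : ℕ∞) f ∧ (∀ r, f (-r) = f r) ∧ (∀ r, ε ≤ f r) ∧
      f 0 ≤ M + ε ∧ (∀ r, a (min |r| R) ≤ f r) ∧ (∀ r, f r ≤ a (min |r| R) + 2 * ε) ∧
      (∀ r, 0 < r → |deriv f r| ≤ c * K * r ^ p) ∧ ∃ k, HasCompactSupport fun r => f r - k := by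
  obtain ⟨η, hη, hηε, hηM⟩ : ∃ η, 0 < η ∧ 2 * η ≤ ε ∧ 2 * η ≤ M :=
    ⟨min ε M / 2, by positivity, by linarith [min_le_left ε M], by linarith [min_le_right ε M]⟩
  -- Lowering `a` by `η` makes room for the mollification error at `0`; the cut-off at `η` keeps
  -- the mollification nonnegative.
  let v : ℝ → ℝ := fun r => max (a (min r R) - η) η
  have hv : Continuous v := by fun_prop
  obtain ⟨g, hg, hg_even, hgv, hg', hgk⟩ :=
    exists_contDiff_approx_comp_abs (R := R) (k := max (a R - η) η) hv
      ((hL.comp_min_const R).max_sub_const η η)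
      (fun r hr => by simp only [v, min_eq_right hr]) hc hη
  have hlower : ∀ r, max (a (min |r| R) - η) η - η ≤ g r := fun r =>
    (sub_le_of_abs_sub_le_left (hgv r))
  have hupper : ∀ r, g r ≤ max (a (min |r| R)) (2 * η) := fun r =>
    calc g r ≤ max (a (min |r| R) - η) η + η := by linarith [(abs_le.1 (hgv r)).2]
      _ = max (a (min |r| R)) (2 * η) := by rw [← max_add_add_right]; ring_nf
  refine ⟨fun r => g r + ε, hg.add contDiff_const, fun r => by simp only [hg_even], fun r => ?_,
    ?_, fun r => ?_, fun r => ?_, fun r hr => ?_, max (a R - η) η + ε, ?_⟩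
  · linarith [hlower r, le_max_right (a (min |r| R) - η) η]
  · have h := hupper 0
    rw [abs_zero, min_eq_left hR] at h
    linarith [h.trans (max_le haM hηM)]
  · linarith [hlower r, le_max_left (a (min |r| R) - η) η]
  · have h : max (a (min |r| R)) (2 * η) ≤ a (min |r| R) + ε :=
      max_le (by linarith) (by linarith [ha0 (min |r| R)])
    linarith [hupper r]
  · rw [deriv_add_const]
    exact hg' r hr
  · simpa only [add_sub_add_right_eq_sub] using hgk

end Smoothing

section Primitive

variable {E : Type*} [NormedAddCommGroup E] [NormedSpace ℝ E]

lemma hasDerivAt_primitive [CompleteSpace E] {g : ℝ → E} (hg : Continuous g) (r : ℝ) :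
    HasDerivAt (fun x => ∫ ζ in (0 : ℝ)..x, g ζ) (g r) r :=
  hg.integral_hasStrictDerivAt 0 r |>.hasDerivAt

lemma contDiff_primitive [CompleteSpace E] {g : ℝ → E} (hg : ContDiff ℝ (⊤ : ℕ∞) g) :
    ContDiff ℝ (⊤ : ℕ∞) fun r => ∫ ζ in (0 : ℝ)..r, g ζ := by
  rw [contDiff_infty_iff_deriv, funext fun r => (hasDerivAt_primitive hg.continuous r).deriv]
  exact ⟨fun r => (hasDerivAt_primitive hg.continuous r).differentiableAt, hg⟩

lemma primitive_neg_of_even {g : ℝ → E} (hg : ∀ r, g (-r) = g r) (r : ℝ) :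
    ∫ ζ in (0 : ℝ)..(-r), g ζ = -∫ ζ in (0 : ℝ)..r, g ζ := by
  have h := intervalIntegral.integral_comp_neg (a := 0) (b := r) g
  simp only [hg, neg_zero] at h
  rw [h, integral_symm]

lemma norm_primitive_sub_le {a : ℝ → E} {f : ℝ → ℝ} (ha : Continuous a) (hf : Continuous f)
    {x y : ℝ} (haf : ∀ z ∈ uIcc x y, ‖a z‖ ≤ f z) :
    ‖(∫ ζ in (0 : ℝ)..x, a ζ) - ∫ ζ in (0 : ℝ)..y, a ζ‖ ≤
      |(∫ ζ in (0 : ℝ)..x, f ζ) - ∫ ζ in (0 : ℝ)..y, f ζ| := by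
  rw [integral_interval_sub_left (ha.intervalIntegrable _ _) (ha.intervalIntegrable _ _),
    integral_interval_sub_left (hf.intervalIntegrable _ _) (hf.intervalIntegrable _ _)]
  refine intervalIntegral.norm_integral_le_abs_of_norm_le ?_ (hf.intervalIntegrable _ _)
  filter_upwards [ae_restrict_mem measurableSet_uIoc] with z hz
  exact haf z (uIcc_comm x y ▸ uIoc_subset_uIcc hz)

lemma iteratedDeriv_bounded_of_hasCompactSupport {g : ℝ → E} (hg : ContDiff ℝ (⊤ : ℕ∞) g)
    (hgs : HasCompactSupport g) (j : ℕ) : ∃ M, ∀ r, ‖iteratedDeriv j g r‖ ≤ M := by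
  obtain ⟨M, hM⟩ := (hgs.iteratedFDeriv (𝕜 := ℝ) j).exists_bound_of_continuous
    (hg.continuous_iteratedFDeriv (by exact_mod_cast le_top))
  exact ⟨M, fun r => by simpa only [norm_iteratedFDeriv_eq_norm_iteratedDeriv] using hM r⟩

lemma iteratedDeriv_bounded_of_hasCompactSupport_sub_const {g : ℝ → E} {k : E}
    (hg : ContDiff ℝ (⊤ : ℕ∞) g) (hgs : HasCompactSupport fun r => g r - k) (j : ℕ) :
    ∃ M, ∀ r, ‖iteratedDeriv j g r‖ ≤ M := by
  obtain ⟨M, hM⟩ := iteratedDeriv_bounded_of_hasCompactSupport (hg.sub contDiff_const) hgs j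
  rcases j with - | j
  · refine ⟨M + ‖k‖, fun r => ?_⟩
    have h := hM r
    rw [iteratedDeriv_zero] at h ⊢
    linarith [norm_sub_norm_le (g r) k]
  · refine ⟨M, fun r => ?_⟩
    have h := hM r
    rw [iteratedDeriv_succ'] at h ⊢
    simpa only [deriv_sub_const_fun] using h

lemma iteratedDeriv_primitive_sq_bounded {f : ℝ → ℝ} {k : ℝ} (hf : ContDiff ℝ (⊤ : ℕ∞) f)
    (hfk : HasCompactSupport fun r => f r - k) (j : ℕ) (hj : 1 ≤ j) :
    ∃ M, ∀ r, |iteratedDeriv j (fun x => ∫ ζ in (0 : ℝ)..x, f ζ ^ 2) r| ≤ M := by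
  obtain ⟨i, rfl⟩ := Nat.exists_eq_add_of_le' hj
  have hsq : ContDiff ℝ (⊤ : ℕ∞) fun r => f r ^ 2 := hf.pow 2
  have hsqk : HasCompactSupport fun r => f r ^ 2 - k ^ 2 := by
    simp only [sq_sub_sq]
    exact hfk.mul_left (f := fun r => f r + k)
  rw [iteratedDeriv_succ', funext fun r => (hasDerivAt_primitive hsq.continuous r).deriv]
  exact iteratedDeriv_bounded_of_hasCompactSupport_sub_const hsq hsqk i

end Primitive

section RightLimit

lemma exists_tendsto_nhdsGT_zero {f f' : ℝ → ℝ} {K p : ℝ} (hp : -1 < p)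
    (hf0 : ∀ r, 0 < r → 0 ≤ f r) (hf : ∀ r, 0 < r → HasDerivAt f (f' r) r)
    (hf' : ∀ r, 0 < r → |f' r| ≤ K * r ^ p) : ∃ L, Tendsto f (𝓝[>] 0) (𝓝 L) := by
  have hq : 0 < p + 1 := by linarith
  have hK : 0 ≤ K := by simpa using (abs_nonneg _).trans (hf' 1 one_pos)
  let g : ℝ → ℝ := fun r => K / (p + 1) * r ^ (p + 1)
  have hderiv : ∀ r, 0 < r → HasDerivAt (fun x => f x + g x) (f' r + K * r ^ p) r := fun r hr =>
    (hf r hr).add (((Real.hasDerivAt_rpow_const (Or.inl hr.ne')).const_mul _).congr_deriv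
      (by rw [add_sub_cancel_right]; field_simp))
  have hmono : MonotoneOn (fun r => f r + g r) (Ioi 0) := by
    refine monotoneOn_of_hasDerivWithinAt_nonneg (f' := fun r => f' r + K * r ^ p)
      (convex_Ioi 0) (fun r hr => (hderiv r hr).continuousAt.continuousWithinAt)
      (fun r hr => ?_) fun r hr => ?_ <;> rw [interior_Ioi] at hr
    · exact (hderiv r hr).hasDerivWithinAt
    · linarith [(abs_le.1 (hf' r hr)).1]
  have hbdd : BddBelow ((fun r => f r + g r) '' Ioi 0) := by
    refine ⟨0, forall_mem_image.2 fun r hr => add_nonneg (hf0 r hr) ?_⟩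
    exact mul_nonneg (div_nonneg hK hq.le) (Real.rpow_nonneg (le_of_lt hr) _)
  have hg : Tendsto g (𝓝[>] 0) (𝓝 0) := by
    have h : ContinuousAt g 0 := (Real.continuousAt_rpow_const 0 _ (Or.inr hq.le)).const_mul _
    simpa [g, Real.zero_rpow hq.ne'] using h.tendsto.mono_left nhdsWithin_le_nhds
  exact ⟨_, by simpa using (hmono.tendsto_nhdsGT hbdd).sub hg⟩

lemma tendsto_nhdsGT_of_hasDerivAt_sq {A a : ℝ → ℝ} {x L : ℝ} (ha : ∀ r, 0 ≤ a r)
    (hA : ∀ r, HasDerivAt A (a r ^ 2) r) (hL : Tendsto a (𝓝[>] x) (𝓝 L)) :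
    Tendsto a (𝓝[>] x) (𝓝 (a x)) := by
  have hderiv : HasDerivWithinAt A (L ^ 2) (Ici x) x :=
    hasDerivWithinAt_Ici_of_tendsto_deriv
      (fun r _ => (hA r).differentiableAt.differentiableWithinAt)
      (hA x).continuousAt.continuousWithinAt univ_mem
      (by simpa only [(hA _).deriv] using hL.pow 2)
  have hsq : a x ^ 2 = L ^ 2 :=
    (uniqueDiffOn_Ici x x self_mem_Ici).eq_deriv _ (hA x).hasDerivWithinAt hderiv
  rwa [(pow_left_inj₀ (ha x) (ge_of_tendsto' hL ha) two_ne_zero).1 hsq]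

end RightLimit

lemma le_of_odd_of_monotoneOn_Ici {α β : Type*} [AddCommGroup α] [LinearOrder α]
    [IsOrderedAddMonoid α] [AddCommGroup β] [PartialOrder β] [IsOrderedAddMonoid β] {G : α → β}
    {c : α} (hodd : ∀ x, G (-x) = -G x) (hmono : MonotoneOn G (Ici c)) (hc : 0 ≤ c)
    (hle : ∀ x, |x| ≤ c → G x ≤ G c) {x y : α} (hxy : x ≤ y) (hcxy : c ≤ max |x| |y|) :
    G x ≤ G y := by
  have hright : ∀ x y, x ≤ y → c ≤ y → G x ≤ G y := by
    intro x y hxy hy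
    rcases le_total c x with hx | hx
    · exact hmono hx hy hxy
    refine le_trans ?_ (hmono self_mem_Ici hy hy)
    rcases le_total (-c) x with hx' | hx'
    · exact hle x (abs_le.2 ⟨hx', hx⟩)
    · have h₁ : G x ≤ G (-c) := by
        simpa only [hodd, neg_neg, neg_le_neg_iff] using
          neg_le_neg (hmono self_mem_Ici (le_neg_of_le_neg hx') (le_neg_of_le_neg hx'))
      exact h₁.trans (hle _ (by rw [abs_neg, abs_of_nonneg hc]))
  rcases le_or_gt c y with hy | hy
  · exact hright x y hxy hy
  · have hx : c ≤ -x := by grind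
    simpa only [hodd, neg_le_neg_iff] using hright (-y) (-x) (neg_le_neg hxy) hx

lemma abs_sub_le_mul_abs_primitive_sub {f : ℝ → ℝ} {K : ℝ} (hf : Continuous f)
    (hf_even : ∀ r, f (-r) = f r) (hf0 : ∀ r, 0 ≤ f r) (hfar : ∀ r, 1 ≤ r → 1 ≤ K * f r)
    (hnear : ∀ r, |r| ≤ 1 →
      |1 - r| ≤ K * |(∫ ζ in (0 : ℝ)..1, f ζ) - ∫ ζ in (0 : ℝ)..r, f ζ|)
    {x y : ℝ} (hxy : 1 ≤ max |x| |y|) :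
    |x - y| ≤ K * |(∫ ζ in (0 : ℝ)..x, f ζ) - ∫ ζ in (0 : ℝ)..y, f ζ| := by
  let F : ℝ → ℝ := fun r => ∫ ζ in (0 : ℝ)..r, f ζ
  have hF : ∀ r, HasDerivAt F (f r) r := hasDerivAt_primitive hf
  have hF_mono : Monotone F := monotone_of_hasDerivAt_nonneg hF hf0
  let G : ℝ → ℝ := fun r => K * F r - r
  have hG : ∀ r, HasDerivAt G (K * f r - 1) r := fun r =>
    ((hF r).const_mul K).sub (hasDerivAt_id r)
  have hG_odd : ∀ r, G (-r) = -G r := fun r => by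
    simp only [G, F, primitive_neg_of_even hf_even]
    ring
  have hG_mono : MonotoneOn G (Ici 1) := by
    refine monotoneOn_of_hasDerivWithinAt_nonneg (convex_Ici 1)
      (fun r _ => (hG r).continuousAt.continuousWithinAt)
      (fun r _ => (hG r).hasDerivWithinAt) fun r hr => ?_
    rw [interior_Ici] at hr
    linarith [hfar r (le_of_lt hr)]
  have hG_le : ∀ r, |r| ≤ 1 → G r ≤ G 1 := fun r hr => by
    have hr1 := (abs_le.1 hr).2
    have h := hnear r hr
    rw [abs_of_nonneg (sub_nonneg.2 hr1), abs_of_nonneg (sub_nonneg.2 (hF_mono hr1))] at h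
    simp only [G, F]
    linarith
  wlog hle : y ≤ x generalizing x y
  · rw [abs_sub_comm, abs_sub_comm (∫ ζ in (0 : ℝ)..x, f ζ)]
    exact this (by rwa [max_comm]) (not_le.1 hle).le
  have h := le_of_odd_of_monotoneOn_Ici hG_odd hG_mono zero_le_one hG_le hle (by rwa [max_comm])
  rw [abs_of_nonneg (sub_nonneg.2 hle), abs_of_nonneg (sub_nonneg.2 (hF_mono hle))]
  simp only [G, F] at h
  linarith

namespace SatisfiesAssumptionA

variable {m K : ℝ} {A a a' : ℝ → ℝ}

lemma even (hA : SatisfiesAssumptionA m K A a a') (r : ℝ) : a (-r) = a r := by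
  obtain ⟨-, hodd, ha, hderiv, -⟩ := hA
  have hneg : HasDerivAt (fun x => -A x) (-(a (-r) ^ 2)) r := by
    simpa only [Function.comp_def, hodd, smul_eq_mul, neg_one_mul] using
      (hderiv (-r)).scomp r (hasDerivAt_neg r)
  have hsq : a (-r) ^ 2 = a r ^ 2 := neg_injective (hneg.unique (hderiv r).neg)
  exact (pow_left_inj₀ (ha _) (ha _) two_ne_zero).1 hsq

lemma pos_const (hA : SatisfiesAssumptionA m K A a a') : 0 < K := by
  obtain ⟨-, -, ha, -, -, -, -, hfar, -⟩ := hA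
  exact pos_of_mul_pos_left (one_pos.trans_le (hfar 1 (by simp))) (ha 1)

lemma continuous (hA : SatisfiesAssumptionA m K A a a') (hm : 1 < m) : Continuous a := by
  have heven := hA.even
  obtain ⟨-, -, ha, hderiv, hda, -, hbound, -⟩ := hA
  obtain ⟨L, hL⟩ := exists_tendsto_nhdsGT_zero (by linarith) (fun r _ => ha r)
    (fun r hr => hda r hr.ne') hbound
  have hright : Tendsto a (𝓝[>] 0) (𝓝 (a 0)) := tendsto_nhdsGT_of_hasDerivAt_sq ha hderiv hL
  have hleft : Tendsto a (𝓝[<] 0) (𝓝 (a 0)) := by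
    have hneg : Tendsto (Neg.neg : ℝ → ℝ) (𝓝[<] 0) (𝓝[>] 0) := by
      simpa only [neg_zero] using tendsto_neg_nhdsLT (a := (0 : ℝ))
    exact (hright.comp hneg).congr heven
  refine continuous_iff_continuousAt.2 fun r => ?_
  rcases eq_or_ne r 0 with rfl | hr
  · rw [continuousAt_iff_punctured_nhds, ← nhdsLT_sup_nhdsGT]
    exact hleft.sup hright
  · exact (hda r hr).continuousAt

lemma rpowLipschitz (hA : SatisfiesAssumptionA m K A a a') : RpowLipschitz K ((m - 3) / 2) a := by
  obtain ⟨-, -, -, -, hda, -, hbound, -⟩ := hA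
  exact RpowLipschitz.of_hasDerivAt (fun r hr => hda r hr.ne') hbound

lemma of_majorant {K' : ℝ} {f : ℝ → ℝ} (hA : SatisfiesAssumptionA m K A a a')
    (ha : Continuous a) (hKK' : K ≤ K') (hf : Differentiable ℝ f) (hf_even : ∀ r, f (-r) = f r)
    (hf_pos : ∀ r, 0 < f r) (hf_zero : f 0 ≤ K')
    (hf' : ∀ r, 0 < r → |deriv f r| ≤ K' * r ^ ((m - 3) / 2))
    (haf : ∀ r, |r| ≤ 1 → a r ≤ f r) (hfar : ∀ r, 1 ≤ |r| → 1 ≤ K * f r) :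
    SatisfiesAssumptionA m K' (fun r => ∫ ζ in (0 : ℝ)..r, f ζ ^ 2) f (deriv f) := by
  have hK := hA.pos_const
  have hfc := hf.continuous
  obtain ⟨-, -, ha0, -, -, -, -, -, hlarge, hsmall⟩ := hA
  have hsq : ∀ r, HasDerivAt (fun x => ∫ ζ in (0 : ℝ)..x, f ζ ^ 2) (f r ^ 2) r :=
    hasDerivAt_primitive (hfc.pow 2)
  have hcompare := fun {x y : ℝ} (hx : |x| ≤ 1) (hy : |y| ≤ 1) =>
    norm_primitive_sub_le ha hfc (x := x) (y := y) fun z hz => by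
      rw [Real.norm_of_nonneg (ha0 z)]
      exact haf z (abs_le.2 (uIcc_subset_Icc (abs_le.1 hx) (abs_le.1 hy) hz))
  refine ⟨strictMono_of_hasDerivAt_pos hsq fun r => pow_pos (hf_pos r) 2,
    primitive_neg_of_even fun r => by rw [hf_even], fun r => (hf_pos r).le, hsq,
    fun r _ => (hf r).hasDerivAt, by rwa [abs_of_pos (hf_pos 0)], hf', fun r hr => ?_,
    fun r s hrs => ?_, fun r s hrs => ?_⟩
  · exact (hfar r hr).trans (mul_le_mul_of_nonneg_right hKK' (hf_pos r).le)
  · exact (abs_sub_le_mul_abs_primitive_sub hfc hf_even (fun r => (hf_pos r).le)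
      (fun r hr => hfar r (hr.trans (le_abs_self r))) (fun x hx => (hlarge 1 x (by simp)).trans
        (mul_le_mul_of_nonneg_left (hcompare (by simp) hx) hK.le)) hrs).trans
      (mul_le_mul_of_nonneg_right hKK' (abs_nonneg _))
  · have hrs' := max_lt_iff.1 hrs
    exact (hsmall r s hrs).trans
      (mul_le_mul hKK' (hcompare hrs'.1.le hrs'.2.le) (abs_nonneg _) (hK.le.trans hKK'))

end SatisfiesAssumptionA

theorem approximation_of_nonlinearity_general {m K : ℝ} (hm : 1 < m) {A a a' : ℝ → ℝ}
    (hA : SatisfiesAssumptionA m K A a a') (R : ℝ) {ε : ℝ} (hε : 0 < ε) (hεK : ε ≤ 2 * K) :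
    ∃ An an an' : ℝ → ℝ,
      ContDiff ℝ (⊤ : ℕ∞) An ∧
      (∀ k : ℕ, 1 ≤ k → ∃ M : ℝ, ∀ r : ℝ, |iteratedDeriv k An r| ≤ M) ∧
      SatisfiesAssumptionA m (3 * K) An an an' ∧
      (∀ r : ℝ, ε ≤ an r) ∧
      (∀ r : ℝ, |r| ≤ R → |a r - an r| ≤ 2 * ε) := by
  have hK := hA.pos_const
  have ha := hA.continuous hm
  have ⟨_, _, ha0, _, _, hazero, _, hafar, _⟩ := hA
  obtain ⟨f, hf, hf_even, hεf, hf_zero, haf, hfa, hf', k, hfk⟩ :=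
    exists_contDiff_majorant (c := 3) (R := max R 1) ha ha0 hA.rpowLipschitz (by norm_num)
      (by positivity) ((le_abs_self _).trans hazero) hK hε
  have habs : ∀ r, a |r| = a r := fun r => by
    rcases abs_choice r with h | h <;> rw [h]
    exact hA.even r
  have hmin : ∀ r, |r| ≤ max R 1 → a (min |r| (max R 1)) = a r := fun r hr => by
    rw [min_eq_left hr, habs]
  refine ⟨fun r => ∫ ζ in (0 : ℝ)..r, f ζ ^ 2, f, deriv f, contDiff_primitive (hf.pow 2),
    iteratedDeriv_primitive_sq_bounded hf hfk,
    hA.of_majorant ha (by linarith) (hf.differentiable (by simp)) hf_even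
      (fun r => hε.trans_le (hεf r)) (by linarith) hf' (fun r hr => ?_) fun r hr => ?_,
    hεf, fun r hr => ?_⟩
  · exact (hmin r (hr.trans (le_max_right _ _))).ge.trans (haf r)
  · have hr' : 1 ≤ min |r| (max R 1) := le_min hr (le_max_right _ _)
    exact (hafar _ (hr'.trans (le_abs_self _))).trans (mul_le_mul_of_nonneg_left (haf r) hK.le)
  · have hr' := hmin r (hr.trans (le_max_left _ _))
    exact abs_le.2 ⟨by linarith [hfa r], by linarith [haf r]⟩

/-- Proposition 5.1: approximation of a porous-medium nonlinearity satisfying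
Assumption 2.1(a) with constant `K` by smooth nondegenerate nonlinearities `Aₙ` with bounded
derivatives satisfying the assumption with constant `3K`, with `𝔞ₙ = √(Aₙ') ≥ 2/n` and
`sup_{|r| ≤ n} |𝔞(r) − 𝔞ₙ(r)| ≤ 4/n`. -/
theorem approximation_of_nonlinearity (m K : ℝ) (hm : 1 < m) (hK : 1 ≤ K)
    (A a a' : ℝ → ℝ) (hA : SatisfiesAssumptionA m K A a a') :
    ∀ n : ℕ, 1 ≤ n → ∃ An an an' : ℝ → ℝ,
      ContDiff ℝ (⊤ : ℕ∞) An ∧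
      (∀ k : ℕ, 1 ≤ k → ∃ M : ℝ, ∀ r : ℝ, |iteratedDeriv k An r| ≤ M) ∧
      SatisfiesAssumptionA m (3 * K) An an an' ∧
      (∀ r : ℝ, 2 / (n : ℝ) ≤ an r) ∧
      (∀ r : ℝ, |r| ≤ (n : ℝ) → |a r - an r| ≤ 4 / (n : ℝ)) := by
  intro n hn
  have hn' : (1 : ℝ) ≤ n := by exact_mod_cast hn
  have h2n : 2 / (n : ℝ) ≤ 2 := div_le_self zero_le_two hn'
  have h4n : 2 * (2 / (n : ℝ)) = 4 / n := by ring
  simpa only [h4n] using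
    approximation_of_nonlinearity_general hm hA n (ε := 2 / n) (by positivity) (by linarith)
end
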